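/- arXiv:1006.5285 — 2 statements merged into one kernel-verified Lean document; each statement's English description precedes it below -/
import Mathlib

section
/- Every complete Hausdorff locally quasi-convex locally minimal abelian topological group is almost minimal. In particular, every locally compact Hausdorff abelian topological group is almost minimal. -/
universe u

/-- `(1/n)U = {x : kx ∈ U for all 1 ≤ k ≤ n}`. -/
def invDiv {G : Type*} [AddGroup G] (n : ℕ) (U : Set G) : Set G :=
  {x | ∀ k : ℕ, 1 ≤ k → k ≤ n → k • x ∈ U}

/-- A Hausdorff topological abelian group is *UFSS* if there is a symmetric neighborhood
`U` of `0` such that the sets `(1/n)U`, `n ∈ ℕ`, form a neighborhood basis at `0`. -/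
def IsUFSS (G : Type*) [AddGroup G] [TopologicalSpace G] : Prop :=
  ∃ U ∈ nhds (0 : G), (∀ x ∈ U, -x ∈ U) ∧
    (∀ n : ℕ, 1 ≤ n → invDiv n U ∈ nhds (0 : G)) ∧
    (∀ V ∈ nhds (0 : G), ∃ n : ℕ, 1 ≤ n ∧ invDiv n U ⊆ V)

/-- A Hausdorff topological abelian group `(G, τ)` is *locally minimal* if there exists a
neighborhood `V` of `0` such that the only Hausdorff group topology `σ` coarser than `τ`
for which `V` is still a `σ`-neighborhood of `0` is `τ` itself. -/
def LocallyMinimal (G : Type*) [AddGroup G] [τ : TopologicalSpace G] : Prop :=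
  ∃ V ∈ nhds (0 : G), ∀ σ : TopologicalSpace G, τ ≤ σ →
    @IsTopologicalAddGroup G σ _ → @T2Space G σ → V ∈ @nhds G σ 0 → σ = τ

/-- A Hausdorff topological abelian group `(G, τ)` is *minimal* if there is no Hausdorff
group topology on `G` strictly coarser than `τ`. -/
def IsMinimal (G : Type*) [AddGroup G] [τ : TopologicalSpace G] : Prop :=
  ∀ σ : TopologicalSpace G, τ ≤ σ →
    @IsTopologicalAddGroup G σ _ → @T2Space G σ → σ = τ

/-- A Hausdorff topological abelian group is *almost minimal* if it has a closed minimal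
subgroup `N` such that `G/N` is UFSS. -/
def IsAlmostMinimal (G : Type*) [AddCommGroup G] [TopologicalSpace G] : Prop :=
  ∃ N : AddSubgroup G, IsClosed (N : Set G) ∧ IsMinimal ↥N ∧ IsUFSS (G ⧸ N)

/-- `𝕋₊`, the image of `[-1/4, 1/4]` in `𝕋 = ℝ/ℤ`. -/
noncomputable def Tplus : Set UnitAddCircle :=
  (fun r : ℝ => (r : UnitAddCircle)) '' Set.Icc (-(1/4) : ℝ) (1/4)

/-- The polar of a subset `A` of a topological abelian group: all continuous characters
`χ : G → 𝕋` with `χ(A) ⊆ 𝕋₊`. -/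
def polar {G : Type*} [AddGroup G] [TopologicalSpace G] (A : Set G) :
    Set (G →+ UnitAddCircle) :=
  {χ | Continuous χ ∧ ∀ x ∈ A, χ x ∈ Tplus}

/-- A subset `A` is *quasi-convex* if it coincides with its quasi-convex hull. -/
def IsQuasiConvex {G : Type*} [AddGroup G] [TopologicalSpace G] (A : Set G) : Prop :=
  A = {x | ∀ χ ∈ polar A, χ x ∈ Tplus}

/-- A topological abelian group is *locally quasi-convex* if it has a neighborhood basis
at `0` consisting of quasi-convex sets. -/
def IsLocallyQuasiConvex (G : Type*) [AddGroup G] [TopologicalSpace G] : Prop :=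
  ∀ V ∈ nhds (0 : G), ∃ A : Set G, IsQuasiConvex A ∧ A ∈ nhds (0 : G) ∧ A ⊆ V

/-!
Let `G` be complete, locally quasi-convex and locally minimal, and let `U` be a quasi-convex
neighbourhood of `0` witnessing local minimality. The seminorm `p x = sup {‖χ x‖ : χ ∈ U^▷}` is
continuous and has `U` as a ball, so the join of the `p`-topology with the Bohr topology is a
coarser Hausdorff group topology in which `U` is a neighbourhood of `0`; hence it is the topology
of `G`. Take for `N` the null space of `p`.

* `N` is minimal: a coarser Hausdorff group topology on `N`, giving a group `N'`, induces on `G` the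
  quotient topology under addition `N' × G → G`. It is Hausdorff and still has `U = N + U` as a
  neighbourhood of `0`, so it is the original one.
* `G ⧸ N` is UFSS: along an ultrafilter with `p → 0` every character converges, by compactness of
  the circle, so the ultrafilter is Cauchy and converges to a point of `N`. Hence every
  neighbourhood of `0` in `G ⧸ N` contains the image of a `p`-ball, and so the image of some
  `(1/n)U`.

A locally compact group is complete, and it is locally minimal because a compact neighbourhood of
`0` determines the topology. For local quasi-convexity, let `G` act on `L²` by translations, and
average this action over a continuous approximate identity to get a normal operator `T`. The
translations and `T` generate a commutative C*-algebra, whose Gelfand characters restrict to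
characters of `G`, continuous whenever `T` is not killed since `x ↦ L x * T` is norm continuous.
An element `x` outside `K - K` moves the indicator function of `K` in `L²` by at least its norm, so
`L x * T - T` is not small and some Gelfand character detects it.
-/

section

open MeasureTheory Filter Topology Set
open scoped Pointwise CompactlySupported ENNReal

section OpenQuotient

variable {H G : Type*} [AddGroup H] [TopologicalSpace H] [IsTopologicalAddGroup H] [AddGroup G]
  [TopologicalSpace G] {f : H →+ G}

theorem isTopologicalAddGroup_of_isOpenQuotientMap (hf : IsOpenQuotientMap f) :
    IsTopologicalAddGroup G where
  continuous_add := by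
    rw [(hf.prodMap hf).isQuotientMap.continuous_iff]
    exact (hf.continuous.comp continuous_add).congr fun p => map_add f p.1 p.2
  continuous_neg := by
    rw [hf.isQuotientMap.continuous_iff]
    exact (hf.continuous.comp continuous_neg).congr fun x => map_neg f x

theorem t2Space_of_isOpenQuotientMap_of_isClosed_ker (hf : IsOpenQuotientMap f)
    (hker : IsClosed (f.ker : Set H)) : T2Space G := by
  rw [t2Space_iff_of_isOpenQuotientMap hf]
  have hset : {q : H × H | f q.1 = f q.2} = (fun q => q.1 - q.2) ⁻¹' (f.ker : Set H) := by
    ext q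
    simp [AddMonoidHom.mem_ker, sub_eq_zero]
  exact hset ▸ hker.preimage continuous_sub

end OpenQuotient

section MinimalityWitness

/-- The property of the neighbourhood in the definition of `LocallyMinimal`: no strictly coarser
Hausdorff group topology has `U` as a neighbourhood of `0`. -/
def IsMinimalityWitness {G : Type*} [AddGroup G] [τ : TopologicalSpace G] (U : Set G) : Prop :=
  ∀ σ : TopologicalSpace G, τ ≤ σ →
    @IsTopologicalAddGroup G σ _ → @T2Space G σ → U ∈ @nhds G σ 0 → σ = τ

namespace IsMinimalityWitness

theorem mono {G : Type*} [AddGroup G] [TopologicalSpace G] {U V : Set G}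
    (hV : IsMinimalityWitness V) (hUV : U ⊆ V) : IsMinimalityWitness U :=
  fun σ hle hσ hT2 hU => hV σ hle hσ hT2 (mem_of_superset hU hUV)

theorem continuous_of_rightInverse {G H : Type*} [AddGroup G] [τ : TopologicalSpace G]
    [AddGroup H] [TopologicalSpace H] [IsTopologicalAddGroup H] {U : Set G}
    (hU : IsMinimalityWitness U) {f : H →+ G} (hker : IsClosed (f.ker : Set H)) {s : G → H}
    (hs : Continuous s) (hsf : Function.RightInverse s f) (hfU : f ⁻¹' U ∈ 𝓝 0) :
    Continuous f := by
  let σ : TopologicalSpace G := .coinduced f inferInstance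
  have hf : @IsOpenQuotientMap H G _ σ f :=
    @AddMonoidHom.isOpenQuotientMap_of_isQuotientMap H _ _ _ G _ σ _ _ _ f
      (@IsQuotientMap.mk H G _ σ f ⟨rfl⟩ hsf.surjective)
  have hle : τ ≤ σ := by
    have : @Continuous G G τ σ (f ∘ s) :=
      @Continuous.comp G H G τ _ σ _ _ hf.continuous hs
    exact continuous_id_iff_le.1 (by rwa [hsf.comp_eq_id] at this)
  have hUσ : U ∈ @nhds G σ 0 := by
    have := hf.isOpenMap.image_mem_nhds hfU
    rwa [image_preimage_eq U hsf.surjective, map_zero] at this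
  have hσ : σ = τ := hU σ hle (@isTopologicalAddGroup_of_isOpenQuotientMap H G _ _ _ _ σ f hf)
    (@t2Space_of_isOpenQuotientMap_of_isClosed_ker H G _ _ _ _ σ f hf hker) hUσ
  exact hσ ▸ hf.continuous

variable {G : Type*} [AddCommGroup G] [TopologicalSpace G] [IsTopologicalAddGroup G]
  {N : AddSubgroup G}

theorem continuous_symm {N' : Type*} [AddCommGroup N'] [TopologicalSpace N']
    [IsTopologicalAddGroup N'] [T2Space N'] {U : Set G} (hU : IsMinimalityWitness U)
    (hU0 : U ∈ 𝓝 0) (hN : IsClosed (N : Set G)) (hNU : ∀ n ∈ N, ∀ x ∈ U, n + x ∈ U)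
    (e : N ≃+ N') (he : Continuous e) : Continuous e.symm := by
  let f : N' × G →+ G := (N.subtype.comp e.symm.toAddMonoidHom).coprod (AddMonoidHom.id G)
  have hf (w : N') (g : G) : f (w, g) = e.symm w + g := rfl
  have hker : IsClosed (f.ker : Set (N' × G)) := by
    have hgraph : (f.ker : Set (N' × G)) =
        Prod.map id Subtype.val '' {p : N' × N | p.1 = -e p.2} := by
      ext ⟨w, g⟩
      constructor
      · intro (h : (e.symm w : G) + g = 0)
        exact ⟨(w, -e.symm w), by simp, Prod.ext rfl (neg_eq_of_add_eq_zero_right h)⟩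
      · rintro ⟨⟨w', n⟩, hw : w' = -e n, h⟩
        obtain ⟨rfl, rfl⟩ := Prod.mk.inj h
        rw [SetLike.mem_coe, AddMonoidHom.mem_ker, hf, id, hw]
        simp
    rw [hgraph]
    exact (IsClosedEmbedding.id.prodMap hN.isClosedEmbedding_subtypeVal).isClosedMap _
      (isClosed_eq continuous_fst (he.comp continuous_snd).neg)
  have hfc : Continuous f := hU.continuous_of_rightInverse hker (s := fun g => (0, g))
    (by fun_prop) (fun g => by simp [hf])
    (mem_of_superset (prod_mem_nhds univ_mem hU0) fun p hp => hNU _ (e.symm p.1).2 _ hp.2)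
  refine Continuous.subtype_mk (?_ : Continuous fun w => (e.symm w : G)) fun w => (e.symm w).2
  exact (hfc.comp (Continuous.prodMk_left (0 : G))).congr fun w => (hf w 0).trans (add_zero _)

theorem isMinimal {U : Set G} (hU : IsMinimalityWitness U) (hU0 : U ∈ 𝓝 0)
    (hN : IsClosed (N : Set G)) (hNU : ∀ n ∈ N, ∀ x ∈ U, n + x ∈ U) : IsMinimal N := by
  intro σ hle hσ hT2
  refine le_antisymm ?_ hle
  exact continuous_id_iff_le.1 <| @continuous_symm G _ _ _ N N _ σ hσ hT2 U hU hU0 hN hNU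
    (AddEquiv.refl N) (continuous_id_iff_le.2 hle)

end IsMinimalityWitness

end MinimalityWitness

section UnitAddCircle

theorem exists_coe_eq_abs_eq_norm (t : UnitAddCircle) :
    ∃ r : ℝ, (r : UnitAddCircle) = t ∧ |r| = ‖t‖ := by
  induction t using QuotientAddGroup.induction_on with
  | H r =>
    refine ⟨r - round r, ?_, UnitAddCircle.norm_eq.symm⟩
    simp

theorem norm_coe_eq_abs_of_abs_le_half {r : ℝ} (hr : |r| ≤ 1 / 2) :
    ‖(r : UnitAddCircle)‖ = |r| :=
  (AddCircle.norm_coe_eq_abs_iff 1 one_ne_zero).2 (by rwa [abs_one])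

theorem mem_Tplus_iff {t : UnitAddCircle} : t ∈ Tplus ↔ ‖t‖ ≤ 1 / 4 := by
  constructor
  · rintro ⟨r, hr, rfl⟩
    have hr' : |r| ≤ 1 / 4 := abs_le.2 hr
    exact (norm_coe_eq_abs_of_abs_le_half (hr'.trans (by norm_num))).trans_le hr'
  · intro ht
    obtain ⟨r, rfl, hr⟩ := exists_coe_eq_abs_eq_norm t
    exact ⟨r, abs_le.1 (hr.trans_le ht), rfl⟩

theorem norm_nsmul_of_mul_norm_le_half {t : UnitAddCircle} {k : ℕ} (hk : k * ‖t‖ ≤ 1 / 2) :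
    ‖k • t‖ = k * ‖t‖ := by
  obtain ⟨r, rfl, hr⟩ := exists_coe_eq_abs_eq_norm t
  have habs : |(k : ℝ) * r| = k * |r| := by rw [abs_mul, Nat.abs_cast]
  rw [← hr, ← habs] at hk
  rw [← AddCircle.coe_nsmul, nsmul_eq_mul, norm_coe_eq_abs_of_abs_le_half hk, habs, hr]

theorem mul_norm_le_of_mem_invDiv_Tplus {t : UnitAddCircle} {n : ℕ} (ht : t ∈ invDiv n Tplus) :
    n * ‖t‖ ≤ 1 / 4 := by
  induction n with
  | zero => norm_num
  | succ n ih =>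
    have hn : n * ‖t‖ ≤ 1 / 4 := ih fun k hk hkn => ht k hk (by omega)
    have hsucc : ‖(n + 1) • t‖ ≤ 1 / 4 := mem_Tplus_iff.1 (ht _ (by omega) le_rfl)
    obtain rfl | hn0 := Nat.eq_zero_or_pos n
    · simpa using hsucc
    have htn : ‖t‖ ≤ 1 / 4 := mem_Tplus_iff.1 (by simpa using ht 1 le_rfl (by omega))
    rwa [norm_nsmul_of_mul_norm_le_half (by push_cast; linarith)] at hsucc

theorem coe_toCircle_coe (r : ℝ) :
    (AddCircle.toCircle (r : UnitAddCircle) : ℂ) =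
      Complex.exp (Complex.I * (2 * Real.pi * r : ℝ)) := by
  rw [AddCircle.toCircle_apply_mk, Circle.coe_exp, div_one, mul_comm]

theorem norm_toCircle_sub_one_le (t : UnitAddCircle) :
    ‖(t.toCircle : ℂ) - 1‖ ≤ 2 * Real.pi * ‖t‖ := by
  obtain ⟨r, rfl, hr⟩ := exists_coe_eq_abs_eq_norm t
  rw [coe_toCircle_coe, ← hr]
  refine Real.norm_exp_I_mul_ofReal_sub_one_le.trans_eq ?_
  rw [Real.norm_eq_abs, abs_mul, abs_of_pos Real.two_pi_pos]

theorem four_mul_norm_le_norm_toCircle_sub_one (t : UnitAddCircle) :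
    4 * ‖t‖ ≤ ‖(t.toCircle : ℂ) - 1‖ := by
  have ht : ‖t‖ ≤ 1 / 2 := by simpa using AddCircle.norm_le_half_period 1 one_ne_zero (x := t)
  obtain ⟨r, rfl, hr⟩ := exists_coe_eq_abs_eq_norm t
  have hsin : 2 / Real.pi * (Real.pi * |r|) ≤ Real.sin (Real.pi * |r|) :=
    Real.mul_le_sin (by positivity) (by rw [hr]; nlinarith [Real.pi_pos])
  calc 4 * ‖(r : UnitAddCircle)‖ = 2 * (2 / Real.pi * (Real.pi * |r|)) := by
        rw [← hr]
        field_simp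
        ring
    _ ≤ 2 * Real.sin (Real.pi * |r|) := by gcongr
    _ ≤ 2 * |Real.sin (Real.pi * r)| := by
        gcongr
        rcases abs_choice r with h | h <;> rw [h]
        · exact le_abs_self _
        · rw [mul_neg, Real.sin_neg]
          exact neg_le_abs _
    _ = ‖(AddCircle.toCircle (r : UnitAddCircle) : ℂ) - 1‖ := by
        rw [coe_toCircle_coe, Complex.norm_exp_I_mul_ofReal_sub_one, Real.norm_eq_abs, abs_mul,
          abs_two, mul_assoc, mul_div_cancel_left₀ _ two_ne_zero]

theorem exists_addMonoidHom_toCircle_eq {G : Type*} [AddCommGroup G]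
    [TopologicalSpace G] {χ : AddChar G Circle} (hχ : Continuous χ) :
    ∃ ψ : G →+ UnitAddCircle, Continuous ψ ∧ ∀ x, (ψ x).toCircle = χ x := by
  let e : UnitAddCircle ≃ₜ Circle := AddCircle.homeomorphCircle one_ne_zero
  have he (z : Circle) : (e.symm z).toCircle = z := by
    rw [← AddCircle.homeomorphCircle_apply one_ne_zero]
    exact e.apply_symm_apply z
  refine ⟨AddMonoidHom.mk' (fun x => e.symm (χ x)) fun x y => ?_,
    e.symm.continuous.comp hχ, fun x => he _⟩
  apply AddCircle.injective_toCircle one_ne_zero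
  rw [AddCircle.toCircle_add, he, he, he, AddChar.map_add_eq_mul]

end UnitAddCircle

section PolarSeminorm

theorem invDiv_mem_nhds_zero {G : Type*} [AddGroup G] [TopologicalSpace G]
    [IsTopologicalAddGroup G] {U : Set G} (hU : U ∈ 𝓝 0) (n : ℕ) : invDiv n U ∈ 𝓝 (0 : G) := by
  have hinter : invDiv n U = ⋂ k ∈ Finset.Icc 1 n, (k • ·) ⁻¹' U := by
    ext x
    simp [invDiv]
  rw [hinter]
  refine (Filter.biInter_finset_mem _).2 fun k _ => ?_
  exact (continuous_nsmul k).continuousAt.preimage_mem_nhds (by rwa [nsmul_zero])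

variable {G : Type*} [AddCommGroup G] [TopologicalSpace G] {U : Set G} {x : G}

theorem bddAbove_range_norm_polar (U : Set G) (x : G) :
    BddAbove (range fun χ : polar U => ‖χ.1 x‖) := by
  refine ⟨1 / 2, ?_⟩
  rintro _ ⟨χ, rfl⟩
  simpa using AddCircle.norm_le_half_period 1 one_ne_zero (x := χ.1 x)

/-- The seminorm `x ↦ sup {‖χ x‖ : χ ∈ U^▷}`, which has a quasi-convex set `U`
as its closed ball of radius `1/4`. -/
noncomputable def polarSeminorm (U : Set G) : AddGroupSeminorm G where
  toFun x := ⨆ χ : polar U, ‖χ.1 x‖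
  map_zero' := by simp
  add_le' x y := by
    refine Real.iSup_le (fun χ => ?_) (add_nonneg (Real.iSup_nonneg fun _ => norm_nonneg _)
      (Real.iSup_nonneg fun _ => norm_nonneg _))
    rw [map_add]
    exact (norm_add_le _ _).trans (add_le_add (le_ciSup (bddAbove_range_norm_polar U x) χ)
      (le_ciSup (bddAbove_range_norm_polar U y) χ))
  neg' x := by simp

theorem norm_apply_le_polarSeminorm {χ : G →+ UnitAddCircle} (hχ : χ ∈ polar U) (x : G) :
    ‖χ x‖ ≤ polarSeminorm U x :=
  le_ciSup (bddAbove_range_norm_polar U x) ⟨χ, hχ⟩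

theorem polarSeminorm_le_iff {r : ℝ} (hr : 0 ≤ r) :
    polarSeminorm U x ≤ r ↔ ∀ χ ∈ polar U, ‖χ x‖ ≤ r :=
  ⟨fun h _ hχ => (norm_apply_le_polarSeminorm hχ x).trans h,
    fun h => Real.iSup_le (fun χ => h χ.1 χ.2) hr⟩

theorem polarSeminorm_eq_zero_iff : polarSeminorm U x = 0 ↔ ∀ χ ∈ polar U, χ x = 0 := by
  rw [← (apply_nonneg (polarSeminorm U) x).ge_iff_eq', polarSeminorm_le_iff le_rfl]
  simp only [norm_le_zero_iff]

theorem IsQuasiConvex.mem_iff_polarSeminorm_le (hU : IsQuasiConvex U) :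
    x ∈ U ↔ polarSeminorm U x ≤ 1 / 4 := by
  rw [polarSeminorm_le_iff (by norm_num)]
  conv_lhs => rw [hU]
  simp only [mem_ofPred_eq, mem_Tplus_iff]

theorem IsQuasiConvex.neg_mem (hU : IsQuasiConvex U) (hx : x ∈ U) : -x ∈ U := by
  rwa [hU.mem_iff_polarSeminorm_le, map_neg_eq_map, ← hU.mem_iff_polarSeminorm_le]

theorem polarSeminorm_le_of_mem_invDiv {n : ℕ} (hn : 0 < n) (hx : x ∈ invDiv n U) :
    polarSeminorm U x ≤ 1 / 4 / n := by
  refine (polarSeminorm_le_iff (by positivity)).2 fun χ hχ => ?_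
  rw [le_div_iff₀' (by positivity)]
  refine mul_norm_le_of_mem_invDiv_Tplus fun k hk hkn => ?_
  rw [← map_nsmul]
  exact hχ.2 _ (hx k hk hkn)

theorem exists_invDiv_subset_of_mem_comap_polarSeminorm {V : Set G}
    (hV : V ∈ comap (polarSeminorm U) (𝓝 0)) : ∃ n : ℕ, 1 ≤ n ∧ invDiv n U ⊆ V := by
  obtain ⟨S, hS, hSV⟩ := hV
  obtain ⟨ε, hε, hεS⟩ := Metric.mem_nhds_iff.1 hS
  obtain ⟨n, hn0, hn⟩ := Real.exists_nat_pos_inv_lt hε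
  refine ⟨n, hn0, fun x hx => hSV (hεS ?_)⟩
  rw [mem_ball_zero_iff, Real.norm_of_nonneg (apply_nonneg _ _)]
  calc polarSeminorm U x ≤ 1 / 4 / n := polarSeminorm_le_of_mem_invDiv hn0 hx
    _ ≤ 1 / n := by gcongr; norm_num
    _ < ε := by rwa [one_div]

theorem nhds_zero_le_comap_polarSeminorm [IsTopologicalAddGroup G] (hU : U ∈ 𝓝 0) :
    𝓝 (0 : G) ≤ comap (polarSeminorm U) (𝓝 0) := fun _ hV =>
  let ⟨n, _, hnV⟩ := exists_invDiv_subset_of_mem_comap_polarSeminorm hV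
  mem_of_superset (invDiv_mem_nhds_zero hU n) hnV

/-- The null space of `polarSeminorm U`. -/
def polarKernel (U : Set G) : AddSubgroup G :=
  ⨅ χ ∈ polar U, χ.ker

theorem mem_polarKernel_iff : x ∈ polarKernel U ↔ polarSeminorm U x = 0 := by
  simp [polarKernel, AddSubgroup.mem_iInf, polarSeminorm_eq_zero_iff]

theorem isClosed_polarKernel (U : Set G) : IsClosed (polarKernel U : Set G) := by
  simp only [polarKernel, AddSubgroup.coe_iInf]
  exact isClosed_biInter fun χ hχ => isClosed_singleton.preimage hχ.1

theorem IsQuasiConvex.add_mem_of_mem_polarKernel (hU : IsQuasiConvex U) {y : G}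
    (hy : y ∈ polarKernel U) (hx : x ∈ U) : y + x ∈ U := by
  rw [hU.mem_iff_polarSeminorm_le] at hx ⊢
  calc polarSeminorm U (y + x) ≤ polarSeminorm U y + polarSeminorm U x := map_add_le_add _ _ _
    _ ≤ 1 / 4 := by rwa [mem_polarKernel_iff.1 hy, zero_add]

end PolarSeminorm

section CoarseTopology

theorem exists_isTopologicalAddGroup_nhds_zero_eq_comap {G : Type*} [AddCommGroup G]
    (p : AddGroupSeminorm G) :
    ∃ σ : TopologicalSpace G, @IsTopologicalAddGroup G σ _ ∧ @nhds G σ 0 = comap p (𝓝 0) :=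
  letI := p.toSeminormedAddCommGroup
  ⟨inferInstance, inferInstance, comap_norm_nhds_zero.symm⟩

theorem le_of_nhds_zero_le {G : Type*} [AddGroup G] {τ σ : TopologicalSpace G}
    (hτ : @IsTopologicalAddGroup G τ _) (hσ : @IsTopologicalAddGroup G σ _)
    (h : @nhds G τ 0 ≤ @nhds G σ 0) : τ ≤ σ := by
  refine continuous_id_iff_le.1 ?_
  exact @continuous_of_continuousAt_zero G τ _ _ G _ _ σ _ _ _ (AddMonoidHom.id G) h

variable {G : Type*} [AddCommGroup G]

/-- The Bohr topology of a topological abelian group: the coarsest topology for which all its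
continuous characters remain continuous. -/
abbrev bohrTopology (G : Type*) [AddCommGroup G] [TopologicalSpace G] : TopologicalSpace G :=
  ⨅ χ : {χ : G →+ UnitAddCircle // Continuous χ}, .induced χ.1 inferInstance

theorem isTopologicalAddGroup_bohrTopology [TopologicalSpace G] :
    @IsTopologicalAddGroup G (bohrTopology G) _ :=
  topologicalAddGroup_iInf fun χ => topologicalAddGroup_induced χ.1

theorem le_bohrTopology [τ : TopologicalSpace G] : τ ≤ bohrTopology G :=
  le_iInf fun χ => continuous_iff_le_induced.1 χ.2

theorem nhds_zero_bohrTopology [TopologicalSpace G] : @nhds G (bohrTopology G) 0 =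
    ⨅ χ : {χ : G →+ UnitAddCircle // Continuous χ}, comap χ.1 (𝓝 0) := by
  rw [bohrTopology, nhds_iInf]
  simp only [nhds_induced, map_zero]

theorem IsLocallyQuasiConvex.exists_apply_ne_zero [TopologicalSpace G] [T1Space G]
    (hG : IsLocallyQuasiConvex G) {x : G} (hx : x ≠ 0) :
    ∃ χ : G →+ UnitAddCircle, Continuous χ ∧ χ x ≠ 0 := by
  obtain ⟨A, hAq, -, hA⟩ := hG {x}ᶜ (isOpen_compl_singleton.mem_nhds hx.symm)
  have hxA : ¬ polarSeminorm A x ≤ 1 / 4 := fun h => hA (hAq.mem_iff_polarSeminorm_le.2 h) rfl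
  rw [polarSeminorm_le_iff (by norm_num)] at hxA
  push Not at hxA
  obtain ⟨χ, hχ, hχx⟩ := hxA
  exact ⟨χ, hχ.1, norm_pos_iff.1 (lt_trans (by norm_num) hχx)⟩

theorem IsLocallyQuasiConvex.t2Space_bohrTopology [TopologicalSpace G] [T1Space G]
    (hG : IsLocallyQuasiConvex G) : @T2Space G (bohrTopology G) := by
  let Φ (x : G) (χ : {χ : G →+ UnitAddCircle // Continuous χ}) : UnitAddCircle := χ.1 x
  have hΦ : Function.Injective Φ := by
    intro x y hxy
    by_contra hne
    obtain ⟨χ, hχ, hχxy⟩ := hG.exists_apply_ne_zero (sub_ne_zero.2 hne)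
    exact hχxy ((map_sub χ x y).trans (sub_eq_zero.2 (congrFun hxy ⟨χ, hχ⟩)))
  exact @T2Space.of_injective_continuous _ _ (bohrTopology G) _ _ Φ hΦ <|
    @continuous_pi _ _ _ (bohrTopology G) _ _ fun χ => continuous_iff_le_induced.2 (iInf_le _ χ)

theorem IsMinimalityWitness.nhds_zero_eq [τ : TopologicalSpace G] [IsTopologicalAddGroup G]
    [T1Space G] (hG : IsLocallyQuasiConvex G) {U : Set G} (hmin : IsMinimalityWitness U)
    (hUq : IsQuasiConvex U) (hU : U ∈ 𝓝 0) :
    𝓝 (0 : G) = comap (polarSeminorm U) (𝓝 0) ⊓ @nhds G (bohrTopology G) 0 := by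
  have hUp : U ∈ comap (polarSeminorm U) (𝓝 0) :=
    mem_of_superset (preimage_mem_comap (Iic_mem_nhds (by norm_num : (0 : ℝ) < 1 / 4)))
      fun x hx => hUq.mem_iff_polarSeminorm_le.2 hx
  have hle0 := nhds_zero_le_comap_polarSeminorm hU
  have hT2 := hG.t2Space_bohrTopology
  have hle : τ ≤ bohrTopology G := le_bohrTopology
  obtain ⟨σ, hσ, hσ0⟩ := exists_isTopologicalAddGroup_nhds_zero_eq_comap (polarSeminorm U)
  rw [← hσ0] at hUp hle0 ⊢
  rw [← nhds_inf]
  congr 1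
  exact (hmin _ (le_inf (le_of_nhds_zero_le ‹_› hσ hle0) hle)
    (topologicalAddGroup_inf hσ (@isTopologicalAddGroup_bohrTopology G _ τ))
    (t2Space_antitone inf_le_right hT2) (nhds_mono inf_le_left hUp)).symm

end CoarseTopology

section AlmostMinimal

variable {G : Type*} [AddCommGroup G] [TopologicalSpace G] {U : Set G}

theorem tendsto_sub_of_tendsto_polarSeminorm
    (hnhds : comap (polarSeminorm U) (𝓝 0) ⊓ @nhds G (bohrTopology G) 0 ≤ 𝓝 0)
    {F : Ultrafilter G} (hF : Tendsto (polarSeminorm U) F (𝓝 0)) :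
    Tendsto (fun q : G × G => q.2 - q.1) ((F : Filter G) ×ˢ F) (𝓝 0) := by
  rw [nhds_zero_bohrTopology] at hnhds
  refine (tendsto_inf.2 ⟨tendsto_comap_iff.2 ?_, tendsto_iInf.2 fun χ => ?_⟩).mono_right hnhds
  · refine squeeze_zero (fun _ => apply_nonneg _ _) (fun q => map_sub_le_add _ q.2 q.1) ?_
    simpa using (hF.comp tendsto_snd).add (hF.comp tendsto_fst)
  · obtain ⟨t, -, ht⟩ := isCompact_univ.ultrafilter_le_nhds (F.map χ.1) (by simp)
    have hχ : Tendsto χ.1 F (𝓝 t) := ht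
    rw [tendsto_comap_iff]
    simpa [Function.comp_def] using (hχ.comp tendsto_snd).sub (hχ.comp tendsto_fst)

theorem mem_polarKernel_of_tendsto_polarSeminorm {F : Filter G} [F.NeBot]
    (hF : Tendsto (polarSeminorm U) F (𝓝 0)) {x : G} (hx : F ≤ 𝓝 x) : x ∈ polarKernel U := by
  rw [mem_polarKernel_iff, polarSeminorm_eq_zero_iff]
  intro χ hχ
  have hzero : Tendsto χ F (𝓝 0) :=
    squeeze_zero_norm (norm_apply_le_polarSeminorm hχ) hF
  exact tendsto_nhds_unique ((hχ.1.tendsto x).mono_left hx) hzero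

theorem exists_mem_polarKernel_le_nhds [IsTopologicalAddGroup G]
    (hG : @CompleteSpace G (IsTopologicalAddGroup.rightUniformSpace G))
    (hnhds : comap (polarSeminorm U) (𝓝 0) ⊓ @nhds G (bohrTopology G) 0 ≤ 𝓝 0)
    {F : Ultrafilter G} (hF : Tendsto (polarSeminorm U) F (𝓝 0)) :
    ∃ x ∈ polarKernel U, F ≤ 𝓝 x := by
  let _ : UniformSpace G := IsTopologicalAddGroup.rightUniformSpace G
  have hcauchy : Cauchy (F : Filter G) := by
    refine ⟨F.neBot, ?_⟩
    change _ ≤ comap (fun q : G × G => q.2 + -q.1) (𝓝 0)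
    rw [← tendsto_iff_comap]
    simpa only [sub_eq_add_neg] using tendsto_sub_of_tendsto_polarSeminorm hnhds hF
  obtain ⟨x, hx⟩ := CompleteSpace.complete hcauchy
  exact ⟨x, mem_polarKernel_of_tendsto_polarSeminorm hF hx, hx⟩

theorem preimage_mk_mem_comap_polarSeminorm [IsTopologicalAddGroup G]
    (hG : @CompleteSpace G (IsTopologicalAddGroup.rightUniformSpace G))
    (hnhds : comap (polarSeminorm U) (𝓝 0) ⊓ @nhds G (bohrTopology G) 0 ≤ 𝓝 0)
    {O : Set (G ⧸ polarKernel U)} (hO : O ∈ 𝓝 0) :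
    (QuotientAddGroup.mk : G → G ⧸ polarKernel U) ⁻¹' O ∈ comap (polarSeminorm U) (𝓝 0) := by
  refine mem_iff_ultrafilter.2 fun F hF => ?_
  obtain ⟨x, hxN, hx⟩ := exists_mem_polarKernel_le_nhds hG hnhds (tendsto_iff_comap.2 hF)
  refine hx (QuotientAddGroup.continuous_mk.continuousAt.preimage_mem_nhds ?_)
  rwa [(QuotientAddGroup.eq_zero_iff x).2 hxN]

theorem IsQuasiConvex.mk_mem_image_mk_iff (hU : IsQuasiConvex U) {x : G} :
    (x : G ⧸ polarKernel U) ∈ (QuotientAddGroup.mk : G → G ⧸ polarKernel U) '' U ↔ x ∈ U := by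
  refine ⟨?_, mem_image_of_mem _⟩
  rintro ⟨u, hu, hux⟩
  simpa using hU.add_mem_of_mem_polarKernel (QuotientAddGroup.eq.1 hux) hu

theorem IsQuasiConvex.isUFSS_quotient_polarKernel [IsTopologicalAddGroup G]
    (hG : @CompleteSpace G (IsTopologicalAddGroup.rightUniformSpace G))
    (hUq : IsQuasiConvex U) (hU : U ∈ 𝓝 0)
    (hnhds : comap (polarSeminorm U) (𝓝 0) ⊓ @nhds G (bohrTopology G) 0 ≤ 𝓝 0) :
    IsUFSS (G ⧸ polarKernel U) := by
  let π : G → G ⧸ polarKernel U := QuotientAddGroup.mk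
  have hπU : π '' U ∈ 𝓝 0 := QuotientAddGroup.isOpenMap_coe.image_mem_nhds hU
  refine ⟨π '' U, hπU, ?_, fun n _ => invDiv_mem_nhds_zero hπU n, fun O hO => ?_⟩
  · rintro _ ⟨u, hu, rfl⟩
    exact ⟨-u, hUq.neg_mem hu, rfl⟩
  · obtain ⟨n, hn, hnO⟩ := exists_invDiv_subset_of_mem_comap_polarSeminorm
      (preimage_mk_mem_comap_polarSeminorm hG hnhds hO)
    refine ⟨n, hn, fun y hy => ?_⟩
    obtain ⟨x, rfl⟩ := QuotientAddGroup.mk_surjective y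
    exact hnO fun k hk hkn => hUq.mk_mem_image_mk_iff.1 (hy k hk hkn)

theorem LocallyMinimal.isAlmostMinimal_of_completeSpace [IsTopologicalAddGroup G] [T1Space G]
    (hmin : LocallyMinimal G) (hlqc : IsLocallyQuasiConvex G)
    (hG : @CompleteSpace G (IsTopologicalAddGroup.rightUniformSpace G)) :
    IsAlmostMinimal G := by
  obtain ⟨V, hV, hVmin⟩ := hmin
  obtain ⟨U, hUq, hU, hUV⟩ := hlqc V hV
  have hUmin : IsMinimalityWitness U := IsMinimalityWitness.mono hVmin hUV
  have hclosed := isClosed_polarKernel U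
  exact ⟨polarKernel U, hclosed,
    hUmin.isMinimal hU hclosed fun n hn x hx => hUq.add_mem_of_mem_polarKernel hn hx,
    hUq.isUFSS_quotient_polarKernel hG hU (hUmin.nhds_zero_eq hlqc hUq hU).ge⟩

end AlmostMinimal

section CommutingOperators

variable {B : Type*} [CStarAlgebra B]

theorem exists_starAlgHom_norm_apply_eq [Nontrivial B] (A : StarSubalgebra ℂ B)
    [IsClosed (A : Set B)] [IsMulCommutative A] (a : A) :
    ∃ φ : A →⋆ₐ[ℂ] ℂ, ‖φ a‖ = ‖a‖ := by
  let : CommCStarAlgebra A :=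
    { StarSubalgebra.cstarAlgebra A with mul_comm := mul_comm' }
  obtain ⟨z, hz, hza⟩ := spectrum.exists_nnnorm_eq_spectralRadius a
  obtain ⟨φ, rfl⟩ := WeakDual.CharacterSpace.mem_spectrum_iff_exists.mp hz
  rw [IsStarNormal.spectralRadius_eq_nnnorm] at hza
  exact ⟨{ WeakDual.CharacterSpace.toAlgHom φ with map_star' := map_star φ },
    congrArg NNReal.toReal (ENNReal.coe_injective hza)⟩

theorem exists_isClosed_isMulCommutative_starSubalgebra {S : Set B}
    (hcomm : ∀ a ∈ S, ∀ b ∈ S, Commute a b) (hstar : ∀ a ∈ S, ∀ b ∈ S, Commute a (star b)) :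
    ∃ A : StarSubalgebra ℂ B, IsClosed (A : Set B) ∧ IsMulCommutative A ∧ S ⊆ A := by
  have hadjoin := StarAlgebra.isMulCommutative_adjoin ℂ hcomm hstar
  have hclosure := (StarSubalgebra.commRingTopologicalClosure (StarAlgebra.adjoin ℂ S)
    hadjoin.is_comm.comm).mul_comm
  exact ⟨(StarAlgebra.adjoin ℂ S).topologicalClosure,
    StarSubalgebra.isClosed_topologicalClosure _, ⟨⟨hclosure⟩⟩,
    (StarAlgebra.subset_adjoin ℂ S).trans (StarSubalgebra.le_topologicalClosure _)⟩

variable {G : Type*} [AddCommGroup G]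

theorem coe_addChar_neg_eq_star (u : AddChar G (unitary B)) (x : G) :
    (u (-x) : B) = star (u x : B) := by
  rw [AddChar.map_neg_eq_inv, ← Unitary.star_eq_inv, Unitary.coe_star]

theorem commute_coe_addChar (u : AddChar G (unitary B)) (x y : G) : Commute (u x : B) (u y) := by
  have hcomm : Commute (u x) (u y) := by
    rw [commute_iff_eq, ← AddChar.map_add_eq_mul, ← AddChar.map_add_eq_mul, add_comm]
  exact hcomm.map (unitary B).subtype

theorem exists_isMulCommutative_starSubalgebra_of_commute (u : AddChar G (unitary B)) {T : B}
    [IsStarNormal T] (hT : ∀ x, Commute (u x : B) T) :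
    ∃ A : StarSubalgebra ℂ B, IsClosed (A : Set B) ∧ IsMulCommutative A ∧
      insert T (range fun x => (u x : B)) ⊆ A := by
  apply exists_isClosed_isMulCommutative_starSubalgebra
  · rintro _ (rfl | ⟨x, rfl⟩) _ (rfl | ⟨y, rfl⟩)
    exacts [.refl _, (hT y).symm, hT x, commute_coe_addChar u x y]
  · rintro _ (rfl | ⟨x, rfl⟩) _ (rfl | ⟨y, rfl⟩)
    · exact (star_comm_self' _).symm
    · rw [← coe_addChar_neg_eq_star]
      exact (hT _).symm
    · have := (hT (-x)).star_star
      rwa [← coe_addChar_neg_eq_star, neg_neg] at this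
    · rw [← coe_addChar_neg_eq_star]
      exact commute_coe_addChar u _ _

theorem exists_addChar_norm_sub_one_mul_eq [Nontrivial B] (u : AddChar G (unitary B)) {T : B}
    [IsStarNormal T] (hT : ∀ x, Commute (u x : B) T) (x : G) :
    ∃ (χ : AddChar G Circle) (c : ℂ), ‖c‖ ≤ ‖T‖ ∧
      ‖((χ x : ℂ) - 1) * c‖ = ‖(u x : B) * T - T‖ ∧
      ∀ y, ‖((χ y : ℂ) - 1) * c‖ ≤ ‖(u y : B) * T - T‖ := by
  obtain ⟨A, hclosed, hcomm, hSA⟩ := exists_isMulCommutative_starSubalgebra_of_commute u hT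
  let t : A := ⟨T, hSA (mem_insert _ _)⟩
  let l (x : G) : A := ⟨u x, hSA (mem_insert_of_mem _ (mem_range_self x))⟩
  obtain ⟨φ, hφ⟩ := exists_starAlgHom_norm_apply_eq A (l x * t - t)
  have hφle (a : A) : ‖φ a‖ ≤ ‖(a : B)‖ := NonUnitalStarAlgHom.norm_apply_le φ a
  have hl (y : G) : l y ∈ unitary A :=
    ⟨Subtype.ext (u y).2.1, Subtype.ext (u y).2.2⟩
  have hl0 : l 0 = 1 := Subtype.ext (congrArg ((↑) : unitary B → B) (AddChar.map_zero_eq_one u))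
  have hladd (y z : G) : l (y + z) = l y * l z :=
    Subtype.ext (congrArg ((↑) : unitary B → B) (AddChar.map_add_eq_mul u y z))
  let χ : AddChar G Circle :=
    { toFun y := ⟨φ (l y), mem_sphere_zero_iff_norm.2
        (CStarRing.norm_of_mem_unitary (Unitary.map_mem φ (hl y)))⟩
      map_zero_eq_one' := Circle.ext ((congrArg φ hl0).trans (map_one φ))
      map_add_eq_mul' y z := Circle.ext ((congrArg φ (hladd y z)).trans (map_mul φ _ _)) }
  have hχ (y : G) : ((χ y : ℂ) - 1) * φ t = φ (l y * t - t) := by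
    rw [map_sub, map_mul, sub_mul, one_mul]
    rfl
  exact ⟨χ, φ t, hφle t, by rw [hχ, hφ]; rfl, fun y => by rw [hχ]; exact hφle _⟩

theorem exists_addChar_norm_sub_one_mul_le [Nontrivial B] (u : AddChar G (unitary B)) {T : B}
    [IsStarNormal T] (hT : ∀ x, Commute (u x : B) T) (hT1 : ‖T‖ ≤ 1) {δ : ℝ} (hδ : 0 < δ) {x : G}
    (hx : δ ≤ ‖(u x : B) * T - T‖) :
    ∃ χ : AddChar G Circle, δ ≤ ‖(χ x : ℂ) - 1‖ ∧
      ∀ y, ‖(χ y : ℂ) - 1‖ ≤ 2 / δ * ‖(u y : B) * T - T‖ := by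
  obtain ⟨χ, c, hcT, hχx, hχ⟩ := exists_addChar_norm_sub_one_mul_eq u hT x
  have hδc : δ ≤ ‖(χ x : ℂ) - 1‖ * ‖c‖ := by rwa [← norm_mul, hχx]
  have hχ2 : ‖(χ x : ℂ) - 1‖ ≤ 2 :=
    (norm_sub_le _ _).trans_eq (by rw [Circle.norm_coe, norm_one, one_add_one_eq_two])
  have hc : δ / 2 ≤ ‖c‖ := by nlinarith [norm_nonneg c]
  refine ⟨χ, ?_, fun y => ?_⟩
  · nlinarith [norm_nonneg ((χ x : ℂ) - 1)]
  · have hy : ‖(χ y : ℂ) - 1‖ * (δ / 2) ≤ ‖(u y : B) * T - T‖ := by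
      refine le_trans ?_ (hχ y)
      rw [norm_mul]
      gcongr
    rw [div_mul_eq_mul_div, le_div_iff₀ hδ]
    linarith

theorem continuous_addChar_of_tendsto_norm_sub_one [TopologicalSpace G]
    [IsTopologicalAddGroup G] {χ : AddChar G Circle}
    (hχ : Tendsto (fun y => ‖(χ y : ℂ) - 1‖) (𝓝 0) (𝓝 0)) : Continuous χ := by
  have hcoe : Tendsto (fun y => (χ y : ℂ)) (𝓝 0) (𝓝 1) := tendsto_iff_norm_sub_tendsto_zero.2 hχ
  have hzero : Tendsto χ (𝓝 0) (𝓝 (χ 0)) := by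
    rw [AddChar.map_zero_eq_one]
    exact tendsto_subtype_rng.2 hcoe
  exact continuous_of_continuousAt_zero χ.toAddMonoidHom hzero

end CommutingOperators

section Averaging

variable {G : Type*} [AddCommGroup G] [TopologicalSpace G]

section Translation

variable [IsTopologicalAddGroup G]

/-- The translate `x ↦ f (x - y)` of a compactly supported function, bundled as such. -/
def translateCc (y : G) (f : C_c(G, ℝ)) : C_c(G, ℝ) where
  toFun x := f (x - y)
  hasCompactSupport' := f.hasCompactSupport.comp_homeomorph (Homeomorph.subRight y)

theorem translateCc_apply (y : G) (f : C_c(G, ℝ)) (x : G) : translateCc y f x = f (x - y) :=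
  rfl

variable [LocallyCompactSpace G] [MeasurableSpace G] [BorelSpace G]

theorem exists_nonneg_integral_eq_one_support_subset (μ : Measure G) [μ.IsAddHaarMeasure]
    {W : Set G} (hW : W ∈ 𝓝 0) :
    ∃ f : C_c(G, ℝ), 0 ≤ f ∧ Function.support f ⊆ W ∧ ∫ x, f x ∂μ = 1 := by
  obtain ⟨f, hf1, hf0, hfc, hfI⟩ := exists_continuous_one_zero_of_isCompact
    (isCompact_singleton (x := (0 : G))) (isOpen_interior (s := W)).isClosed_compl
    (disjoint_singleton_left.2 (not_not.2 (mem_interior_iff_mem_nhds.2 hW)))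
  have hpos : 0 < ∫ x, f x ∂μ :=
    f.continuous.integral_pos_of_hasCompactSupport_nonneg_nonzero hfc (fun x => (hfI x).1)
      (x := 0) (by rw [hf1 rfl]; exact one_ne_zero)
  refine ⟨(∫ x, f x ∂μ)⁻¹ • ⟨f, hfc⟩, fun x => ?_, fun x hx => ?_, ?_⟩
  · exact mul_nonneg (inv_nonneg.2 hpos.le) (hfI x).1
  · by_contra hxW
    have hfx : f x = 0 := hf0 fun h => hxW (interior_subset h)
    exact hx (mul_eq_zero_of_right _ hfx)
  · exact (integral_const_mul _ _).trans (inv_mul_cancel₀ hpos.ne')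

theorem tendsto_integral_norm_translateCc_sub (μ : Measure G) [IsFiniteMeasureOnCompacts μ]
    (f : C_c(G, ℝ)) :
    Tendsto (fun y => ∫ x, ‖(translateCc y f - f) x‖ ∂μ) (𝓝 0) (𝓝 0) := by
  obtain ⟨s, hs, hs0⟩ := exists_compact_mem_nhds (0 : G)
  have hcont : ContinuousOn (fun y => ∫ x, ‖f (x - y) - f x‖ ∂μ) s := by
    refine continuousOn_integral_of_compact_support
      ((f.hasCompactSupport.isCompact.add hs).union f.hasCompactSupport) ?_ fun y x hy hx => ?_
    · have := map_continuous f
      exact Continuous.continuousOn (by unfold Function.uncurry; fun_prop)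
    · have hfx : f x = 0 := image_eq_zero_of_notMem_tsupport fun h => hx (Or.inr h)
      have hfxy : f (x - y) = 0 := image_eq_zero_of_notMem_tsupport fun h =>
        hx (Or.inl ⟨x - y, h, y, hy, sub_add_cancel x y⟩)
      rw [hfx, hfxy, sub_zero, norm_zero]
  simpa [translateCc_apply] using (hcont.continuousAt hs0).tendsto

end Translation

variable {H : Type*} [NormedAddCommGroup H] [InnerProductSpace ℂ H] [CompleteSpace H]
  {L : AddChar G (unitary (H →L[ℂ] H))}

variable [MeasurableSpace G] [BorelSpace G] (μ : Measure G) [IsFiniteMeasureOnCompacts μ]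

theorem integrable_smul_rep_apply (hL : ∀ v, Continuous fun x => (L x : H →L[ℂ] H) v)
    (f : C_c(G, ℝ)) (v : H) :
    Integrable (fun x => f x • (L x : H →L[ℂ] H) v) μ :=
  ((map_continuous f).smul (hL v)).integrable_of_hasCompactSupport f.hasCompactSupport.smul_right

variable (hL : ∀ v, Continuous fun x => (L x : H →L[ℂ] H) v) (f : C_c(G, ℝ))

/-- The operator `v ↦ ∫ f(x) L(x)v dμ(x)` attached to a strongly continuous unitary
representation `L` and a weight `f`. -/
noncomputable def averagingOperator : H →L[ℂ] H :=
  LinearMap.mkContinuous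
    { toFun := fun v => ∫ x, f x • (L x : H →L[ℂ] H) v ∂μ
      map_add' := fun v w => by
        simp only [map_add, smul_add]
        exact integral_add (integrable_smul_rep_apply μ hL f v)
          (integrable_smul_rep_apply μ hL f w)
      map_smul' := fun c v => by
        simp only [map_smul, RingHom.id_apply, smul_comm _ c]
        exact integral_smul c _ }
    (∫ x, ‖f x‖ ∂μ) fun v => by
      refine (norm_integral_le_integral_norm _).trans_eq ?_
      simp only [norm_smul, Unitary.norm_map]
      exact integral_mul_const _ _

theorem averagingOperator_apply (v : H) :
    averagingOperator μ hL f v = ∫ x, f x • (L x : H →L[ℂ] H) v ∂μ :=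
  rfl

theorem norm_averagingOperator_le : ‖averagingOperator μ hL f‖ ≤ ∫ x, ‖f x‖ ∂μ :=
  LinearMap.mkContinuous_norm_le _ (integral_nonneg fun _ => norm_nonneg _) _

theorem averagingOperator_sub (g : C_c(G, ℝ)) :
    averagingOperator μ hL (f - g) = averagingOperator μ hL f - averagingOperator μ hL g := by
  ext v
  simp only [averagingOperator_apply, sub_apply, CompactlySupportedContinuousMap.sub_apply,
    sub_smul]
  exact integral_sub (integrable_smul_rep_apply μ hL f v) (integrable_smul_rep_apply μ hL g v)

theorem apply_averagingOperator_apply (C : H →L[ℂ] H) (v : H) :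
    C (averagingOperator μ hL f v) = ∫ x, f x • C ((L x : H →L[ℂ] H) v) ∂μ := by
  rw [averagingOperator_apply,
    ← ContinuousLinearMap.integral_comp_comm C (integrable_smul_rep_apply μ hL f v)]
  exact integral_congr_ae (.of_forall fun x => map_real_smul C C.continuous _ _)

theorem commute_averagingOperator {C : H →L[ℂ] H} (hC : ∀ x, Commute C (L x)) :
    Commute C (averagingOperator μ hL f) := by
  ext v
  refine (apply_averagingOperator_apply μ hL f C v).trans ?_
  have hCL (x : G) : C ((L x : H →L[ℂ] H) v) = (L x : H →L[ℂ] H) (C v) :=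
    DFunLike.congr_fun (hC x) v
  simp only [hCL]
  rfl

theorem commute_rep_averagingOperator (y : G) :
    Commute (L y : H →L[ℂ] H) (averagingOperator μ hL f) :=
  commute_averagingOperator μ hL f (commute_coe_addChar L y)

theorem isStarNormal_averagingOperator : IsStarNormal (averagingOperator μ hL f) where
  star_comm_self := commute_averagingOperator μ hL f fun x => by
    have := (commute_rep_averagingOperator μ hL f (-x)).star_star.symm
    rwa [← coe_addChar_neg_eq_star, neg_neg] at this

theorem norm_averagingOperator_apply_sub_le (hf : 0 ≤ f) (hf1 : ∫ x, f x ∂μ = 1) {v : H} {ε : ℝ}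
    (hε : Function.support f ⊆ {x | ‖(L x : H →L[ℂ] H) v - v‖ ≤ ε}) :
    ‖averagingOperator μ hL f v - v‖ ≤ ε := by
  have hfint : Integrable f μ :=
    (map_continuous f).integrable_of_hasCompactSupport f.hasCompactSupport
  have hsub : averagingOperator μ hL f v - v
      = ∫ x, f x • ((L x : H →L[ℂ] H) v - v) ∂μ := by
    simp only [smul_sub]
    rw [integral_sub (integrable_smul_rep_apply μ hL f v) (hfint.smul_const v),
      integral_smul_const, hf1, one_smul, averagingOperator_apply]
  calc ‖averagingOperator μ hL f v - v‖ ≤ ∫ x, f x * ε ∂μ := by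
        rw [hsub]
        refine norm_integral_le_of_norm_le (hfint.mul_const ε) (.of_forall fun x => ?_)
        rw [norm_smul, Real.norm_of_nonneg (hf x)]
        obtain hfx | hfx := eq_or_ne (f x) 0
        · rw [hfx, zero_mul, zero_mul]
        · exact mul_le_mul_of_nonneg_left (hε hfx) (hf x)
    _ = ε := by rw [integral_mul_const, hf1, one_mul]

variable [IsTopologicalAddGroup G]

theorem rep_mul_averagingOperator [μ.IsAddRightInvariant] (y : G) :
    (L y : H →L[ℂ] H) * averagingOperator μ hL f = averagingOperator μ hL (translateCc y f) := by
  ext v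
  refine (apply_averagingOperator_apply μ hL f _ v).trans ?_
  rw [averagingOperator_apply,
    ← integral_add_right_eq_self (fun x => translateCc y f x • (L x : H →L[ℂ] H) v) y]
  refine integral_congr_ae (.of_forall fun x => ?_)
  have hLadd : (L (x + y) : H →L[ℂ] H) v = (L y : H →L[ℂ] H) ((L x : H →L[ℂ] H) v) := by
    rw [add_comm, AddChar.map_add_eq_mul]
    rfl
  simp only [translateCc_apply, add_sub_cancel_right, hLadd]

theorem norm_rep_mul_averagingOperator_sub_le [μ.IsAddRightInvariant] (y : G) :
    ‖(L y : H →L[ℂ] H) * averagingOperator μ hL f - averagingOperator μ hL f‖ ≤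
      ∫ x, ‖(translateCc y f - f) x‖ ∂μ := by
  rw [rep_mul_averagingOperator, ← averagingOperator_sub]
  exact norm_averagingOperator_le μ hL _

end Averaging

section Spectral

variable {G : Type*} [AddCommGroup G] [TopologicalSpace G] [IsTopologicalAddGroup G]
  [LocallyCompactSpace G] {H : Type*} [NormedAddCommGroup H] [InnerProductSpace ℂ H]
  [CompleteSpace H] {L : AddChar G (unitary (H →L[ℂ] H))}

theorem exists_isStarNormal_commute_norm_apply_sub_le
    (hL : ∀ v, Continuous fun x => (L x : H →L[ℂ] H) v) (v : H) {ε : ℝ} (hε : 0 < ε) :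
    ∃ T : H →L[ℂ] H, IsStarNormal T ∧ (∀ x, Commute (L x : H →L[ℂ] H) T) ∧ ‖T‖ ≤ 1 ∧
      ‖T v - v‖ ≤ ε ∧ Tendsto (fun y => ‖(L y : H →L[ℂ] H) * T - T‖) (𝓝 0) (𝓝 0) := by
  borelize G
  have hW : {x | ‖(L x : H →L[ℂ] H) v - v‖ ≤ ε} ∈ 𝓝 0 := by
    have hcont : Continuous fun x => ‖(L x : H →L[ℂ] H) v - v‖ :=
      ((hL v).sub continuous_const).norm
    refine hcont.continuousAt.preimage_mem_nhds (Iic_mem_nhds ?_)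
    rw [AddChar.map_zero_eq_one, OneMemClass.coe_one, one_apply_eq_self, sub_self, norm_zero]
    exact hε
  obtain ⟨f, hf, hfW, hf1⟩ :=
    exists_nonneg_integral_eq_one_support_subset Measure.addHaar hW
  refine ⟨averagingOperator Measure.addHaar hL f, isStarNormal_averagingOperator _ hL f,
    commute_rep_averagingOperator _ hL f, ?_,
    norm_averagingOperator_apply_sub_le _ hL f hf hf1 hfW, ?_⟩
  · refine (norm_averagingOperator_le _ hL f).trans_eq ?_
    simp only [Real.norm_of_nonneg (hf _), hf1]
  · exact squeeze_zero (fun _ => norm_nonneg _)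
      (norm_rep_mul_averagingOperator_sub_le _ hL f)
      (tendsto_integral_norm_translateCc_sub _ f)

theorem norm_unitary_apply_sub_le (U : unitary (H →L[ℂ] H)) (T : H →L[ℂ] H) (v : H) :
    ‖(U : H →L[ℂ] H) v - v‖ ≤ ‖(U : H →L[ℂ] H) * T - T‖ * ‖v‖ + 2 * ‖T v - v‖ := by
  have hsplit : (U : H →L[ℂ] H) v - v
      = ((U : H →L[ℂ] H) * T - T) v + ((T v - v) - (U : H →L[ℂ] H) (T v - v)) := by
    rw [sub_apply, mul_apply_eq_comp, map_sub]
    abel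
  calc ‖(U : H →L[ℂ] H) v - v‖
      ≤ ‖((U : H →L[ℂ] H) * T - T) v‖ + (‖T v - v‖ + ‖(U : H →L[ℂ] H) (T v - v)‖) := by
        rw [hsplit]
        exact (norm_add_le _ _).trans (add_le_add_right (norm_sub_le _ _) _)
    _ ≤ ‖(U : H →L[ℂ] H) * T - T‖ * ‖v‖ + 2 * ‖T v - v‖ := by
        rw [Unitary.norm_map, ← two_mul]
        exact add_le_add_left (ContinuousLinearMap.le_opNorm _ _) _

theorem exists_nhds_forall_exists_addChar (hL : ∀ v, Continuous fun x => (L x : H →L[ℂ] H) v)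
    {v : H} (hv : v ≠ 0) {δ ε η : ℝ} (hδ : 0 < δ) (hδε : δ < ε) (hη : 0 < η) :
    ∃ W ∈ 𝓝 (0 : G), ∀ x, ε * ‖v‖ ≤ ‖(L x : H →L[ℂ] H) v - v‖ → ∃ χ : AddChar G Circle,
      Continuous χ ∧ (∀ y ∈ W, ‖(χ y : ℂ) - 1‖ ≤ η) ∧ δ ≤ ‖(χ x : ℂ) - 1‖ := by
  have hv0 : 0 < ‖v‖ := norm_pos_iff.2 hv
  have : Nontrivial H := ⟨v, 0, hv⟩
  obtain ⟨T, hTn, hTcomm, hT1, hTv, hTlim⟩ :=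
    exists_isStarNormal_commute_norm_apply_sub_le hL v
      (mul_pos (half_pos (sub_pos.2 hδε)) hv0)
  have hlim : Tendsto (fun y => 2 / δ * ‖(L y : H →L[ℂ] H) * T - T‖) (𝓝 0) (𝓝 0) := by
    simpa using hTlim.const_mul (2 / δ)
  refine ⟨_, hlim.eventually_le_const hη, fun x hx => ?_⟩
  have hδx : δ ≤ ‖(L x : H →L[ℂ] H) * T - T‖ := by
    refine le_of_mul_le_mul_right ?_ hv0
    linarith [norm_unitary_apply_sub_le (L x) T v]
  obtain ⟨χ, hχx, hχ⟩ := exists_addChar_norm_sub_one_mul_le L hTcomm hT1 hδ hδx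
  exact ⟨χ, continuous_addChar_of_tendsto_norm_sub_one
      (squeeze_zero (fun _ => norm_nonneg _) hχ hlim),
    fun y hy => (hχ y).trans hy, hχx⟩

end Spectral

section RegularRepresentation

variable {G : Type*} [AddCommGroup G] [MeasurableSpace G]

/-- The action of `G` on `L²(μ)` by translations, as a homomorphism into the unitary group. -/
noncomputable def regularRep [MeasurableAdd G] (μ : Measure G) [μ.IsAddLeftInvariant] :
    AddChar G (unitary (Lp ℂ 2 μ →L[ℂ] Lp ℂ 2 μ)) where
  toFun x := Unitary.linearIsometryEquiv.symm
    { toFun := fun v => DomAddAct.mk x +ᵥ v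
      invFun := fun v => -DomAddAct.mk x +ᵥ v
      map_add' := DomAddAct.vadd_Lp_add _
      map_smul' := fun c v =>
        (Lp.compMeasurePreservingₗ ℂ _ (measurePreserving_vadd x μ)).map_smul c v
      left_inv := neg_vadd_vadd _
      right_inv := vadd_neg_vadd _
      norm_map' := DomAddAct.norm_vadd_Lp _ }
  map_zero_eq_one' := by
    ext1
    ext1 v
    exact zero_vadd Gᵈᵃᵃ v
  map_add_eq_mul' x y := by
    ext1
    ext1 v
    rw [add_comm x y]
    exact add_vadd (DomAddAct.mk x) (DomAddAct.mk y) v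

theorem norm_le_norm_regularRep_indicator_sub [MeasurableAdd G] (μ : Measure G)
    [μ.IsAddLeftInvariant] {K : Set G} (hK : MeasurableSet K) (hμK : μ K ≠ ∞) {x : G}
    (hx : x ∉ K - K) :
    ‖indicatorConstLp 2 hK hμK (1 : ℂ)‖ ≤
      ‖(regularRep μ x : Lp ℂ 2 μ →L[ℂ] Lp ℂ 2 μ) (indicatorConstLp 2 hK hμK 1)
        - indicatorConstLp 2 hK hμK 1‖ := by
  set v := indicatorConstLp 2 hK hμK (1 : ℂ)
  set w := (regularRep μ x : Lp ℂ 2 μ →L[ℂ] Lp ℂ 2 μ) v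
  have hdisj : (x +ᵥ ·) ⁻¹' K ∩ K = ∅ :=
    eq_empty_of_forall_notMem fun y hy => hx ⟨x + y, hy.1, y, hy.2, add_sub_cancel_right x y⟩
  have horth : inner ℂ w v = 0 := by
    rw [show w = _ from DomAddAct.mk_vadd_indicatorConstLp x hK hμK 1,
      L2.inner_indicatorConstLp_indicatorConstLp _ _ (by rwa [measure_preimage_vadd]) hμK,
      hdisj, measureReal_empty, zero_smul]
  have hpyth : ‖w - v‖ ^ 2 = ‖w‖ ^ 2 + ‖v‖ ^ 2 := by
    rw [norm_sub_sq (𝕜 := ℂ), horth, map_zero, mul_zero, sub_zero]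
  refine le_of_sq_le_sq ?_ (norm_nonneg _)
  exact hpyth.symm ▸ le_add_of_nonneg_left (sq_nonneg _)

variable [TopologicalSpace G] [IsTopologicalAddGroup G] [BorelSpace G]

theorem continuous_regularRep_apply (μ : Measure G) [μ.IsAddLeftInvariant]
    [IsLocallyFiniteMeasure μ] [μ.InnerRegularCompactLTTop] (v : Lp ℂ 2 μ) :
    Continuous fun x => (regularRep μ x : Lp ℂ 2 μ →L[ℂ] Lp ℂ 2 μ) v := by
  have : Fact ((2 : ℝ≥0∞) ≠ ∞) := ⟨ENNReal.ofNat_ne_top⟩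
  exact DomAddAct.continuous_mk.vadd continuous_const

end RegularRepresentation

section LocallyQuasiConvex

/-- The smallest quasi-convex set containing `A`. -/
def quasiConvexHull {G : Type*} [AddGroup G] [TopologicalSpace G] (A : Set G) : Set G :=
  {x | ∀ χ ∈ polar A, χ x ∈ Tplus}

theorem subset_quasiConvexHull {G : Type*} [AddGroup G] [TopologicalSpace G] (A : Set G) :
    A ⊆ quasiConvexHull A :=
  fun x hx _ hχ => hχ.2 x hx

theorem isQuasiConvex_quasiConvexHull {G : Type*} [AddGroup G] [TopologicalSpace G]
    (A : Set G) : IsQuasiConvex (quasiConvexHull A) :=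
  (subset_quasiConvexHull _).antisymm fun _ hx χ hχ => hx χ ⟨hχ.1, fun _ hy => hy χ hχ⟩

variable {G : Type*} [AddCommGroup G] [TopologicalSpace G] [IsTopologicalAddGroup G]

theorem exists_nhds_forall_notMem_exists_addChar [LocallyCompactSpace G] {O : Set G}
    (hO : O ∈ 𝓝 (0 : G)) {δ η : ℝ} (hδ0 : 0 < δ) (hδ : δ < 1) (hη : 0 < η) :
    ∃ W ∈ 𝓝 (0 : G), ∀ x ∉ O, ∃ χ : AddChar G Circle, Continuous χ ∧
      (∀ y ∈ W, ‖(χ y : ℂ) - 1‖ ≤ η) ∧ δ ≤ ‖(χ x : ℂ) - 1‖ := by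
  borelize G
  let μ : Measure G := Measure.addHaar
  obtain ⟨S, hS, hSO⟩ : ∃ S ∈ 𝓝 (0 : G), ∀ᵉ (x ∈ S) (y ∈ S), x - y ∈ O :=
    exists_nhds_half_neg hO
  obtain ⟨K, ⟨hK0, hK, hKcl⟩, hKS⟩ := (isCompact_isClosed_basis_nhds (0 : G)).mem_iff.1 hS
  have hμK : μ K ≠ ∞ := hK.measure_ne_top
  set v := indicatorConstLp 2 hKcl.measurableSet hμK (1 : ℂ)
  have hv0 : v ≠ 0 := by
    rw [← norm_ne_zero_iff, norm_indicatorConstLp two_ne_zero ENNReal.ofNat_ne_top,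
      norm_one, one_mul]
    have hpos : 0 < μ.real K :=
      ENNReal.toReal_pos (μ.measure_pos_of_mem_nhds hK0).ne' hμK
    positivity
  obtain ⟨W, hW, hWχ⟩ := exists_nhds_forall_exists_addChar
    (continuous_regularRep_apply μ) hv0 hδ0 hδ hη
  refine ⟨W, hW, fun x hx => hWχ x ?_⟩
  rw [one_mul]
  exact norm_le_norm_regularRep_indicator_sub μ hKcl.measurableSet hμK
    fun ⟨y, hy, z, hz, hyz⟩ => hx (hyz ▸ hSO y (hKS hy) z (hKS hz))

theorem exists_nhds_forall_notMem_exists_addMonoidHom [LocallyCompactSpace G] {O : Set G}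
    (hO : O ∈ 𝓝 (0 : G)) :
    ∃ W ∈ 𝓝 (0 : G), ∀ x ∉ O, ∃ ψ : G →+ UnitAddCircle, Continuous ψ ∧
      (∀ y ∈ W, ‖ψ y‖ ≤ 1 / 8) ∧ 1 / 8 < ‖ψ x‖ := by
  -- These constants come from `η / 4 = 1 / 8` and `2 * π / 8 < δ`.
  obtain ⟨W, hW, hWχ⟩ := exists_nhds_forall_notMem_exists_addChar hO
    (δ := 4 / 5) (η := 1 / 2) (by norm_num) (by norm_num) (by norm_num)
  refine ⟨W, hW, fun x hx => ?_⟩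
  obtain ⟨χ, hχ, hχW, hχx⟩ := hWχ x hx
  obtain ⟨ψ, hψ, hψχ⟩ := exists_addMonoidHom_toCircle_eq hχ
  refine ⟨ψ, hψ, fun y hy => ?_, ?_⟩
  · have hlow := four_mul_norm_le_norm_toCircle_sub_one (ψ y)
    rw [hψχ] at hlow
    linarith [hχW y hy]
  · have hup := norm_toCircle_sub_one_le (ψ x)
    rw [hψχ] at hup
    by_contra! hle
    nlinarith [Real.pi_lt_d2, Real.pi_pos, norm_nonneg (ψ x)]

theorem isLocallyQuasiConvex_of_locallyCompactSpace [LocallyCompactSpace G] :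
    IsLocallyQuasiConvex G := by
  intro O hO
  obtain ⟨W, hW, hWψ⟩ := exists_nhds_forall_notMem_exists_addMonoidHom hO
  refine ⟨quasiConvexHull W, isQuasiConvex_quasiConvexHull W,
    mem_of_superset hW (subset_quasiConvexHull W), fun x hx => ?_⟩
  by_contra hxO
  obtain ⟨ψ, hψ, hψW, hψx⟩ := hWψ x hxO
  -- Both `ψ` and `2 • ψ` lie in the polar of `W`, so `x` in the hull forces `‖ψ x‖ ≤ 1 / 8`.
  have hmem : ∀ k ≤ 2, k • ψ ∈ polar W := by
    refine fun k hk => ⟨hψ.nsmul k, fun y hy => mem_Tplus_iff.2 ?_⟩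
    calc ‖k • ψ y‖ ≤ k * ‖ψ y‖ := norm_nsmul_le
      _ ≤ 2 * (1 / 8) := by gcongr; exacts [mod_cast hk, hψW y hy]
      _ = 1 / 4 := by norm_num
  have hinv : ψ x ∈ invDiv 2 Tplus := fun k _ hk => hx _ (hmem k hk)
  have := mul_norm_le_of_mem_invDiv_Tplus hinv
  push_cast at this
  linarith

end LocallyQuasiConvex

section LocallyCompact

theorem mem_nhds_of_isCompact_mem_nhds {X : Type*} {τ σ : TopologicalSpace X} (hle : τ ≤ σ)
    [hσ : @T2Space X σ] {x : X} {V : Set X} (hVc : @IsCompact X τ V) (hVσ : V ∈ @nhds X σ x)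
    {O : Set X} (hO : O ∈ @nhds X τ x) : O ∈ @nhds X σ x := by
  obtain ⟨O', hO'O, hO', hxO'⟩ := (@mem_nhds_iff X τ _ _).1 hO
  have hcpt : @IsCompact X σ (V \ O') := by
    simpa only [image_id] using
      @IsCompact.image X X τ σ _ id (@IsCompact.diff X τ _ _ hVc hO') (continuous_id_of_le hle)
  have hcompl : (V \ O')ᶜ ∈ @nhds X σ x :=
    (@IsCompact.isClosed X σ hσ _ hcpt).isOpen_compl.mem_nhds fun hx => hx.2 hxO'
  filter_upwards [hVσ, hcompl] with y hyV hy
  exact hO'O (by_contra fun hyO' => hy ⟨hyV, hyO'⟩)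

theorem locallyMinimal_of_weaklyLocallyCompactSpace (G : Type*) [AddGroup G]
    [TopologicalSpace G] [IsTopologicalAddGroup G] [WeaklyLocallyCompactSpace G] :
    LocallyMinimal G := by
  obtain ⟨V, hVc, hV⟩ := WeaklyLocallyCompactSpace.exists_compact_mem_nhds (0 : G)
  refine ⟨V, hV, fun σ hle hσ hT2 hVσ => ?_⟩
  refine IsTopologicalAddGroup.ext hσ inferInstance (le_antisymm ?_ ?_)
  · exact fun O hO => mem_nhds_of_isCompact_mem_nhds hle hVc hVσ hO
  · exact nhds_mono hle

theorem completeSpace_rightUniformSpace (G : Type*) [AddGroup G] [TopologicalSpace G]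
    [IsTopologicalAddGroup G] [WeaklyLocallyCompactSpace G] :
    @CompleteSpace G (IsTopologicalAddGroup.rightUniformSpace G) := by
  let _ : UniformSpace G := IsTopologicalAddGroup.rightUniformSpace G
  have : IsRightUniformAddGroup G := { uniformity_eq := rfl }
  exact IsRightUniformAddGroup.completeSpace_of_weaklyLocallyCompactSpace

end LocallyCompact

end

/-- Every complete Hausdorff locally quasi-convex locally minimal abelian topological
group is almost minimal; in particular, every locally compact Hausdorff abelian
topological group is almost minimal. (Completeness is taken with respect to the
two-sided (Raikov) uniformity, which for abelian groups is the canonical group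
uniformity.) -/
theorem complete_lqc_locallyMinimal_isAlmostMinimal :
    (∀ (G : Type u) [AddCommGroup G] [TopologicalSpace G] [IsTopologicalAddGroup G]
      [T2Space G], @CompleteSpace G (IsTopologicalAddGroup.rightUniformSpace G) →
        IsLocallyQuasiConvex G → LocallyMinimal G → IsAlmostMinimal G) ∧
    (∀ (G : Type u) [AddCommGroup G] [TopologicalSpace G] [IsTopologicalAddGroup G]
      [T2Space G] [LocallyCompactSpace G], IsAlmostMinimal G) :=
  ⟨fun _ _ _ _ _ hG hlqc hmin => hmin.isAlmostMinimal_of_completeSpace hlqc hG,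
    fun G _ _ _ _ _ =>
      (locallyMinimal_of_weaklyLocallyCompactSpace G).isAlmostMinimal_of_completeSpace
        isLocallyQuasiConvex_of_locallyCompactSpace (completeSpace_rightUniformSpace G)⟩
end

section
/- Let G be a precompact Hausdorff locally minimal abelian topological group. Then G has a closed subgroup N such that N (with the subspace topology) is minimal and there exist n ∈ ℕ and a continuous injective group homomorphism from G/N into the torus 𝕋^n, where 𝕋 = ℝ/ℤ. -/
/-- A topological abelian group is *precompact* (totally bounded) if every neighborhood
`V` of `0` admits a finite set `F` with `F + V = G`. For Hausdorff abelian groups this is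
equivalent to the Raikov completion being compact. -/
def IsPrecompact (G : Type*) [AddCommGroup G] [TopologicalSpace G] : Prop :=
  ∀ V ∈ nhds (0 : G), ∃ F : Finset G, ∀ x : G, ∃ y ∈ F, x - y ∈ V

/-
A continuous homomorphism `f` of `G` into a torus with `ker f` inside a small neighbourhood of `0`
does the job with `N = ker f`. Such an `f` exists because finitely many characters of the compact
completion of `G` suffice to send no point outside a given neighbourhood of `0` to `0`. To see that
`N` is minimal, let `σ` be a coarser Hausdorff group topology on `N` and give `G` the quotient
topology induced by `(N, σ) × G → G`, `(a, g) ↦ g - a`: the kernel is the graph of the inclusion,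
which is closed, so this topology is Hausdorff, and since `N` is small, the neighbourhood witnessing
local minimality remains a neighbourhood of `0`. Hence it is the original topology, so that the
inclusion `(N, σ) → G` is continuous.

That characters separate the points of a locally compact abelian group `K` follows from Gelfand
duality for the C⋆-algebra generated by the regular representation `π` on `L²` together with an
operator `T = ∫ f(z) π(z) dz`, `f ∈ L¹`. As translation is continuous on `L¹`, the map
`y ↦ T π(y)` is norm continuous; so every character `φ` of the algebra with `φ(T) ≠ 0` restricts to
a continuous character `y ↦ φ(π(y))` of `K`.
-/

open Filter Topology Set MeasureTheory WeakDual
open scoped ENNReal InnerProductSpace IsMulCommutative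

section CStarAlgebra

theorem exists_characterSpace_apply_ne_zero {A : Type*} [CommCStarAlgebra A] {a : A}
    (ha : a ≠ 0) : ∃ φ : characterSpace ℂ A, φ a ≠ 0 := by
  by_contra! hφ
  refine ha ((gelfandTransform_isometry A).injective ?_)
  ext φ
  simpa using hφ φ

variable {K : Type*} [TopologicalSpace K]

theorem exists_pontryaginDual_apply_ne_one_of_commCStarAlgebra [Monoid K] {A : Type*}
    [CommCStarAlgebra A] (u : K →* unitary A) {t : A} (ht : Continuous fun y ↦ t * (u y : A))
    {x : K} (hx : t * (u x : A) ≠ t) : ∃ χ : PontryaginDual K, χ x ≠ 1 := by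
  obtain ⟨φ, hφ⟩ := exists_characterSpace_apply_ne_zero (sub_ne_zero.2 hx)
  have hφ' : φ t * (φ (u x) - 1) ≠ 0 := by rwa [mul_sub_one, ← map_mul, ← map_sub]
  have hφt : φ t ≠ 0 := left_ne_zero_of_mul hφ'
  have hφu : Continuous fun y ↦ φ (u y) := by
    have : Continuous fun y ↦ (φ t)⁻¹ * φ (t * u y) :=
      continuous_const.mul ((map_continuous φ).comp ht)
    simpa only [map_mul, inv_mul_cancel_left₀ hφt] using this
  have hnorm (y : K) : φ (u y) ∈ Submonoid.unitSphere ℂ :=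
    mem_sphere_zero_iff_norm.2 <|
      CStarRing.norm_of_mem_unitary (Unitary.map_mem φ (u y).2)
  have hmul (y z : K) : φ (u (y * z)) = φ (u y) * φ (u z) := by
    rw [map_mul, Submonoid.coe_mul, map_mul]
  let χ : K →ₜ* Circle :=
    { toFun y := ⟨φ (u y), hnorm y⟩
      map_one' := Circle.ext (by simp)
      map_mul' y z := Circle.ext (hmul y z)
      continuous_toFun := hφu.subtype_mk hnorm }
  refine ⟨χ, fun h ↦ right_ne_zero_of_mul hφ' ?_⟩
  exact sub_eq_zero.2 (congrArg (Subtype.val : Circle → ℂ) h)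

theorem commute_star_of_commute_unitary {R : Type*} [Monoid R] [StarMul R] {a : R}
    {u : unitary R} (h : Commute a (u : R)) : Commute a (star (u : R)) :=
  Commute.units_inv_right (u := Unitary.toUnits u) h

theorem commute_coe_map_unitary {M R : Type*} [CommMonoid M] [Monoid R] [StarMul R]
    (π : M →* unitary R) (y z : M) : Commute (π y : R) (π z : R) := by
  rw [commute_iff_eq, ← Submonoid.coe_mul, ← Submonoid.coe_mul, ← map_mul, ← map_mul, mul_comm]

variable [CommMonoid K] {B : Type*} [CStarAlgebra B] (U : K →* unitary B)

theorem exists_pontryaginDual_apply_ne_one_of_isSelfAdjoint {S : B}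
    (hS : IsSelfAdjoint S) (hSU : ∀ y, Commute S (U y : B))
    (hc : Continuous fun y ↦ S * (U y : B)) {x : K} (hx : S * (U x : B) ≠ S) :
    ∃ χ : PontryaginDual K, χ x ≠ 1 := by
  let s : Set B := insert S (range fun y ↦ (U y : B))
  have hcomm : ∀ a ∈ s, ∀ b ∈ s, Commute a b := by
    rintro _ (rfl | ⟨y, rfl⟩) _ (rfl | ⟨z, rfl⟩)
    exacts [Commute.refl _, hSU z, (hSU y).symm, commute_coe_map_unitary U y z]
  have hcomm_star : ∀ a ∈ s, ∀ b ∈ s, Commute a (star b) := by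
    rintro a ha _ (rfl | ⟨z, rfl⟩)
    · rw [hS.star_eq]
      exact hcomm a ha _ (mem_insert _ _)
    · exact commute_star_of_commute_unitary (hcomm a ha _ (.inr ⟨z, rfl⟩))
  have := StarAlgebra.isMulCommutative_adjoin ℂ hcomm hcomm_star
  let A : StarSubalgebra ℂ B := (StarAlgebra.adjoin ℂ s).topologicalClosure
  have hA : IsClosed (A : Set B) := StarSubalgebra.isClosed_topologicalClosure _
  let _ : CommCStarAlgebra A :=
    { StarSubalgebra.cstarAlgebra A with
      mul_comm := (StarSubalgebra.commRingTopologicalClosure _ mul_comm).mul_comm }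
  have hsA : s ⊆ A :=
    (StarAlgebra.subset_adjoin ℂ s).trans (StarSubalgebra.le_topologicalClosure _)
  let u : K →* unitary A :=
    { toFun y := ⟨⟨U y, hsA (.inr ⟨y, rfl⟩)⟩,
        Unitary.mem_iff.2 ⟨Subtype.ext (Unitary.coe_star_mul_self _),
          Subtype.ext (Unitary.coe_mul_star_self _)⟩⟩
      map_one' := by ext; simp
      map_mul' y z := by ext; simp }
  exact exists_pontryaginDual_apply_ne_one_of_commCStarAlgebra u (t := ⟨S, hsA (.inl rfl)⟩)
    (x := x) (hc.subtype_mk _) fun h ↦ hx (congrArg Subtype.val h)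

theorem exists_pontryaginDual_apply_ne_one_of_commute {T : B}
    (hTU : ∀ y, Commute T (U y : B)) (hc : Continuous fun y ↦ T * (U y : B)) {x : K}
    (hx : T * (U x : B) ≠ T) : ∃ χ : PontryaginDual K, χ x ≠ 1 := by
  have hTU' (y : K) : Commute (star T) (U y : B) :=
    commute_star_comm.2 (commute_star_of_commute_unitary (hTU y))
  refine exists_pontryaginDual_apply_ne_one_of_isSelfAdjoint U (.star_mul_self T)
    (fun y ↦ (hTU' y).mul_left (hTU y)) ?_ (x := x) ?_
  · simp only [mul_assoc]
    exact continuous_const.mul hc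
  · intro h
    refine hx (sub_eq_zero.1 (CStarRing.star_mul_self_eq_zero_iff _ |>.1 ?_))
    calc star (T * U x - T) * (T * U x - T)
        = (star (U x : B) - 1) * (star T * T * U x - star T * T) := by
          simp only [star_sub, star_mul]
          noncomm_ring
      _ = 0 := by rw [h, sub_self, mul_zero]

end CStarAlgebra

section IntegratedOperator

theorem exists_isOpen_subset_measure_ne_top {X : Type*} [TopologicalSpace X]
    [MeasurableSpace X] (μ : Measure X) [IsLocallyFiniteMeasure μ] {x : X} {s : Set X}
    (hs : s ∈ 𝓝 x) : ∃ t ⊆ s, IsOpen t ∧ x ∈ t ∧ μ t ≠ ∞ := by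
  obtain ⟨u, hus, hu, hxu⟩ := mem_nhds_iff.1 hs
  obtain ⟨w, hxw, hw, hμw⟩ := μ.exists_isOpen_measure_lt_top x
  exact ⟨u ∩ w, inter_subset_left.trans hus, hu.inter hw, ⟨hxu, hxw⟩,
    measure_ne_top_of_subset inter_subset_right hμw.ne⟩

variable {K H : Type*} [NormedAddCommGroup H] [InnerProductSpace ℂ H] [CompleteSpace H]

theorem norm_inner_unitary_apply_le (u : unitary (H →L[ℂ] H)) (v w : H) :
    ‖⟪(u : H →L[ℂ] H) v, w⟫_ℂ‖ ≤ ‖v‖ * ‖w‖ := by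
  simpa only [Unitary.norm_map] using norm_inner_le_norm (𝕜 := ℂ) ((u : H →L[ℂ] H) v) w

variable [MeasurableSpace K] {μ : Measure K} {U : K → unitary (H →L[ℂ] H)}

theorem norm_integral_mul_inner_unitary_apply_le (f : Lp ℂ 1 μ) (v w : H) :
    ‖∫ z, f z * ⟪(U z : H →L[ℂ] H) v, w⟫_ℂ ∂μ‖ ≤ ‖f‖ * ‖v‖ * ‖w‖ := by
  rw [L1.norm_eq_integral_norm, mul_assoc, ← integral_mul_const]
  refine norm_integral_le_of_norm_le ((L1.integrable_coeFn f).norm.mul_const _)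
    (.of_forall fun z ↦ ?_)
  rw [norm_mul]
  gcongr
  exact norm_inner_unitary_apply_le (U z) v w

variable [TopologicalSpace K] [OpensMeasurableSpace K]

theorem integrable_mul_inner_unitary_apply
    (hU : ∀ v, Continuous fun z ↦ (U z : H →L[ℂ] H) v) {f : K → ℂ} (hf : Integrable f μ)
    (v w : H) : Integrable (fun z ↦ f z * ⟪(U z : H →L[ℂ] H) v, w⟫_ℂ) μ :=
  hf.mul_bdd ((hU v).inner continuous_const).aestronglyMeasurable
    (.of_forall fun z ↦ norm_inner_unitary_apply_le (U z) v w)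

variable (hU : ∀ v, Continuous fun z ↦ (U z : H →L[ℂ] H) v)

/-- The bounded sesquilinear form `(v, w) ↦ ∫ f z * ⟪U z v, w⟫` of a strongly continuous family
`U` of unitary operators. -/
noncomputable def integratedForm (f : Lp ℂ 1 μ) : H →L⋆[ℂ] H →L[ℂ] ℂ :=
  have hint := integrable_mul_inner_unitary_apply hU (L1.integrable_coeFn f)
  LinearMap.mkContinuous₂
    (LinearMap.mk₂'ₛₗ (starRingEnd ℂ) (RingHom.id ℂ)
      (fun v w ↦ ∫ z, f z * ⟪(U z : H →L[ℂ] H) v, w⟫_ℂ ∂μ)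
      (fun v v' w ↦ by
        simp only [map_add, inner_add_left, mul_add, integral_add (hint v w) (hint v' w)])
      (fun c v w ↦ by
        simp only [map_smul, inner_smul_left, mul_left_comm _ (starRingEnd ℂ c),
          integral_const_mul, smul_eq_mul])
      (fun v w w' ↦ by
        simp only [inner_add_right, mul_add, integral_add (hint v w) (hint v w')])
      (fun c v w ↦ by
        simp only [inner_smul_right, mul_left_comm _ c, integral_const_mul, smul_eq_mul,
          RingHom.id_apply]))
    ‖f‖ (norm_integral_mul_inner_unitary_apply_le f)

/-- The weak integral of `U` against `f`, characterised by
`⟪integratedOperator hU f v, w⟫ = ∫ f z * ⟪U z v, w⟫`. As the inner product is conjugate-linear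
on the left, this is `∫ conj (f z) • U z`; the Bochner integral is not available because `U` need
not be norm-measurable. -/
noncomputable def integratedOperator (f : Lp ℂ 1 μ) : H →L[ℂ] H :=
  InnerProductSpace.continuousLinearMapOfBilin (integratedForm hU f)

theorem inner_integratedOperator_apply (f : Lp ℂ 1 μ) (v w : H) :
    ⟪integratedOperator hU f v, w⟫_ℂ = ∫ z, f z * ⟪(U z : H →L[ℂ] H) v, w⟫_ℂ ∂μ :=
  InnerProductSpace.continuousLinearMapOfBilin_apply _ v w

theorem norm_integratedOperator_le (f : Lp ℂ 1 μ) : ‖integratedOperator hU f‖ ≤ ‖f‖ := by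
  refine ContinuousLinearMap.opNorm_le_bound _ (norm_nonneg f) fun v ↦ ?_
  calc ‖integratedOperator hU f v‖
      = ‖integratedForm hU f v‖ := (InnerProductSpace.toDual ℂ H).symm.norm_map _
    _ ≤ ‖integratedForm hU f‖ * ‖v‖ := (integratedForm hU f).le_opNorm v
    _ ≤ ‖f‖ * ‖v‖ := by
      gcongr
      exact LinearMap.mkContinuous₂_norm_le _ (norm_nonneg f)
        (norm_integral_mul_inner_unitary_apply_le f)

theorem integratedOperator_sub (f g : Lp ℂ 1 μ) :
    integratedOperator hU (f - g) = integratedOperator hU f - integratedOperator hU g := by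
  ext1 v
  refine ext_inner_right ℂ fun w ↦ ?_
  have hint (h : Lp ℂ 1 μ) := integrable_mul_inner_unitary_apply hU (L1.integrable_coeFn h) v w
  rw [sub_apply, inner_sub_left]
  simp only [inner_integratedOperator_apply]
  rw [← integral_sub (hint f) (hint g)]
  refine integral_congr_ae ?_
  filter_upwards [Lp.coeFn_sub f g] with z hz
  simp only [hz, Pi.sub_apply, sub_mul]

theorem continuous_integratedOperator :
    Continuous (integratedOperator hU : Lp ℂ 1 μ → H →L[ℂ] H) := by
  refine LipschitzWith.continuous (K := 1) (.of_dist_le_mul fun f g ↦ ?_)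
  simpa only [dist_eq_norm, ← integratedOperator_sub, NNReal.coe_one, one_mul] using
    norm_integratedOperator_le hU (f - g)

theorem commute_integratedOperator {S : H →L[ℂ] H} (hS : ∀ z, Commute (U z : H →L[ℂ] H) S)
    (f : Lp ℂ 1 μ) : Commute (integratedOperator hU f) S := by
  ext1 v
  refine ext_inner_right ℂ fun w ↦ ?_
  have hSU (z : K) : (U z : H →L[ℂ] H) (S v) = S ((U z : H →L[ℂ] H) v) :=
    DFunLike.congr_fun (hS z).eq v
  calc ⟪integratedOperator hU f (S v), w⟫_ℂ
      = ∫ z, f z * ⟪(U z : H →L[ℂ] H) v, ContinuousLinearMap.adjoint S w⟫_ℂ ∂μ := by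
        simp only [inner_integratedOperator_apply, hSU, ContinuousLinearMap.adjoint_inner_right]
    _ = ⟪S (integratedOperator hU f v), w⟫_ℂ := by
        rw [← inner_integratedOperator_apply hU, ContinuousLinearMap.adjoint_inner_right]

theorem inner_integratedOperator_indicatorConstLp_apply {s : Set K} (hs : MeasurableSet s)
    (hμs : μ s ≠ ∞) (v w : H) :
    ⟪integratedOperator hU (indicatorConstLp 1 hs hμs 1) v, w⟫_ℂ =
      ∫ z in s, ⟪(U z : H →L[ℂ] H) v, w⟫_ℂ ∂μ := by
  rw [inner_integratedOperator_apply, ← integral_indicator hs]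
  refine integral_congr_ae ?_
  filter_upwards [indicatorConstLp_coeFn (p := 1) (hs := hs) (hμs := hμs) (c := (1 : ℂ))]
    with z hz
  by_cases hzs : z ∈ s <;> simp [hz, hzs]

theorem exists_integratedOperator_apply_ne_zero [Nonempty K] [IsLocallyFiniteMeasure μ]
    [μ.IsOpenPosMeasure] {v : H} (hv : v ≠ 0) :
    ∃ f : Lp ℂ 1 μ, integratedOperator hU f v ≠ 0 := by
  obtain ⟨z₀⟩ := ‹Nonempty K›
  let w : H := (U z₀ : H →L[ℂ] H) v
  let φ (z : K) : ℂ := ⟪(U z : H →L[ℂ] H) v, w⟫_ℂ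
  have hφ : Continuous φ := (hU v).inner continuous_const
  have hφz₀ : 0 < RCLike.re (φ z₀) := by
    rw [inner_self_eq_norm_sq (𝕜 := ℂ) w, Unitary.norm_map]
    exact pow_pos (norm_pos_iff.2 hv) 2
  obtain ⟨C, hCφ, hC, hz₀C, hμC⟩ := exists_isOpen_subset_measure_ne_top μ
    ((RCLike.continuous_re.comp hφ).continuousAt.eventually_const_lt hφz₀)
  have hφC : IntegrableOn φ C μ :=
    .of_bound hμC.lt_top hφ.aestronglyMeasurable (‖v‖ * ‖w‖)
      (.of_forall fun z ↦ norm_inner_unitary_apply_le (U z) v w)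
  have hsupp : C ⊆ Function.support fun z ↦ RCLike.re (φ z) := fun z hz ↦ (hCφ hz).ne'
  have hpos : 0 < ∫ z in C, RCLike.re (φ z) ∂μ := by
    rw [setIntegral_pos_iff_support_of_nonneg_ae
      (ae_restrict_of_forall_mem hC.measurableSet fun z hz ↦ (hCφ hz).le) hφC.re,
      inter_eq_right.2 hsupp]
    exact hC.measure_pos μ ⟨z₀, hz₀C⟩
  refine ⟨indicatorConstLp 1 hC.measurableSet hμC 1, fun h ↦ hpos.ne' ?_⟩
  have hzero : ∫ z in C, φ z ∂μ = 0 := by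
    rw [← inner_integratedOperator_indicatorConstLp_apply hU hC.measurableSet hμC, h,
      inner_zero_left]
  exact (integral_re hφC).trans (by simp [hzero])

end IntegratedOperator

section UnitaryRepresentation

variable {K H : Type*} [CommGroup K] [TopologicalSpace K] [IsTopologicalGroup K]
  [NormedAddCommGroup H] [InnerProductSpace ℂ H] [CompleteSpace H]
  (π : K →* unitary (H →L[ℂ] H)) (hπ : ∀ v, Continuous fun z ↦ (π z : H →L[ℂ] H) v)

theorem integratedOperator_mul [MeasurableSpace K] [BorelSpace K] {μ : Measure K}
    [μ.IsMulLeftInvariant] (f : Lp ℂ 1 μ) (y : K) :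
    integratedOperator hπ f * (π y : H →L[ℂ] H) =
      integratedOperator hπ (DomMulAct.mk y⁻¹ • f) := by
  ext1 v
  refine ext_inner_right ℂ fun w ↦ ?_
  rw [mul_apply_eq_comp, inner_integratedOperator_apply, inner_integratedOperator_apply,
    ← integral_mul_left_eq_self _ y⁻¹]
  refine integral_congr_ae ?_
  filter_upwards [DomMulAct.smul_Lp_ae_eq (DomMulAct.mk y⁻¹) f] with z hz
  have hvw : (π (y⁻¹ * z) : H →L[ℂ] H) ((π y : H →L[ℂ] H) v) = (π z : H →L[ℂ] H) v := by
    rw [← mul_apply_eq_comp, ← Submonoid.coe_mul, ← map_mul, mul_right_comm, inv_mul_cancel,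
      one_mul]
  rw [hz, hvw, Equiv.symm_apply_apply, smul_eq_mul]

theorem continuous_integratedOperator_mul [LocallyCompactSpace K] [MeasurableSpace K]
    [BorelSpace K] {μ : Measure K} [μ.IsMulLeftInvariant] [μ.Regular] (f : Lp ℂ 1 μ) :
    Continuous fun y ↦ integratedOperator hπ f * (π y : H →L[ℂ] H) := by
  have : Fact ((1 : ℝ≥0∞) ≠ ∞) := ⟨ENNReal.one_ne_top⟩
  have htranslate : Continuous fun y : K ↦ (DomMulAct.mk y⁻¹ • f : Lp ℂ 1 μ) :=
    (DomMulAct.continuous_mk.comp continuous_inv).smul continuous_const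
  simp only [integratedOperator_mul]
  exact (continuous_integratedOperator hπ).comp htranslate

theorem exists_pontryaginDual_apply_ne_one_of_unitary_ne_one [LocallyCompactSpace K]
    (hπ : ∀ v, Continuous fun z ↦ (π z : H →L[ℂ] H) v) {x : K} (hx : π x ≠ 1) :
    ∃ χ : PontryaginDual K, χ x ≠ 1 := by
  borelize K
  obtain ⟨v, hv⟩ : ∃ v, (π x : H →L[ℂ] H) v - v ≠ 0 := by
    by_contra! h
    exact hx (Subtype.ext (ContinuousLinearMap.ext fun v ↦ sub_eq_zero.1 (h v)))
  obtain ⟨f, hf⟩ := exists_integratedOperator_apply_ne_zero (μ := Measure.haar) hπ hv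
  refine exists_pontryaginDual_apply_ne_one_of_commute π
    (fun y ↦ commute_integratedOperator hπ (fun z ↦ commute_coe_map_unitary π z y) f)
    (continuous_integratedOperator_mul π hπ f) (x := x) fun h ↦ hf ?_
  rw [map_sub, sub_eq_zero]
  exact DFunLike.congr_fun h v

end UnitaryRepresentation

section RegularRepresentation

variable {K : Type*} [CommGroup K] [TopologicalSpace K] [IsTopologicalGroup K]
  [MeasurableSpace K] [BorelSpace K] (μ : Measure K) [μ.IsMulLeftInvariant]

/-- The regular representation of a commutative group on `L²`, by `f ↦ f (y * ·)`;
commutativity makes this a homomorphism without inverting `y`. -/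
noncomputable def regularRepresentation :
    K →* unitary (Lp ℂ 2 μ →L[ℂ] Lp ℂ 2 μ) where
  toFun y := Unitary.linearIsometryEquiv.symm
    { DistribMulAction.toLinearEquiv ℂ (Lp ℂ 2 μ) (DomMulAct.mk y) with
      norm_map' := DomMulAct.norm_smul_Lp (DomMulAct.mk y) }
  map_one' := by
    ext1
    exact ContinuousLinearMap.ext fun f ↦ one_smul Kᵈᵐᵃ f
  map_mul' y z := by
    ext1
    refine ContinuousLinearMap.ext fun f ↦ ?_
    rw [mul_comm y z]
    exact mul_smul (DomMulAct.mk y) (DomMulAct.mk z) f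

theorem regularRepresentation_apply (y : K) (f : Lp ℂ 2 μ) :
    (regularRepresentation μ y : Lp ℂ 2 μ →L[ℂ] Lp ℂ 2 μ) f = DomMulAct.mk y • f :=
  rfl

theorem continuous_regularRepresentation_apply [LocallyCompactSpace K] [μ.Regular]
    (f : Lp ℂ 2 μ) :
    Continuous fun y ↦ (regularRepresentation μ y : Lp ℂ 2 μ →L[ℂ] Lp ℂ 2 μ) f := by
  have : Fact ((2 : ℝ≥0∞) ≠ ∞) := ⟨ENNReal.ofNat_ne_top⟩
  simp only [regularRepresentation_apply]
  exact DomMulAct.continuous_mk.smul continuous_const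

theorem regularRepresentation_ne_one [T2Space K] [IsLocallyFiniteMeasure μ]
    [μ.IsOpenPosMeasure] {x : K} (hx : x ≠ 1) : regularRepresentation μ x ≠ 1 := by
  intro h
  obtain ⟨A, B, hA, hB, hAB⟩ := t2_separation_nhds hx
  have hxA : (x • ·) ⁻¹' A ∈ 𝓝 (1 : K) :=
    (continuous_const_smul x).continuousAt (by rwa [smul_eq_mul, mul_one])
  obtain ⟨C, hCAB, hC, h1C, hμC⟩ := exists_isOpen_subset_measure_ne_top μ (inter_mem hxA hB)
  have hdisj : Disjoint C ((x • ·) ⁻¹' C) :=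
    disjoint_left.2 fun z hz hxz ↦ disjoint_left.1 hAB (hCAB hz).1 (hCAB hxz).2
  have hae : (x • ·) ⁻¹' C =ᵐ[μ] C := by
    refine (indicatorConstLp_inj _ _ hC.measurableSet hμC (one_ne_zero (α := ℂ))).1
      ((DomMulAct.mk_smul_indicatorConstLp (p := 2) x hC.measurableSet hμC 1).symm.trans ?_)
    rw [← regularRepresentation_apply, h, OneMemClass.coe_one, one_apply_eq_self]
  have hzero : μ C = 0 := by
    simpa only [hdisj.sdiff_eq_left] using (ae_eq_set.1 hae).2
  exact (hC.measure_pos μ ⟨1, h1C⟩).ne' hzero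

end RegularRepresentation

theorem exists_pontryaginDual_apply_ne_one {K : Type*} [CommGroup K] [TopologicalSpace K]
    [IsTopologicalGroup K] [LocallyCompactSpace K] [T2Space K] {x : K} (hx : x ≠ 1) :
    ∃ χ : PontryaginDual K, χ x ≠ 1 := by
  borelize K
  exact exists_pontryaginDual_apply_ne_one_of_unitary_ne_one
    (regularRepresentation Measure.haar) (continuous_regularRepresentation_apply _)
    (regularRepresentation_ne_one _ hx)

section Torus

theorem exists_continuous_addMonoidHom_unitAddCircle_apply_ne_zero {K : Type*} [AddCommGroup K]
    [TopologicalSpace K] [IsTopologicalAddGroup K] [LocallyCompactSpace K] [T2Space K] {x : K}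
    (hx : x ≠ 0) : ∃ χ : K →+ UnitAddCircle, Continuous χ ∧ χ x ≠ 0 := by
  have : T2Space (Multiplicative K) := ‹T2Space K›
  obtain ⟨χ, hχ⟩ := exists_pontryaginDual_apply_ne_one (K := Multiplicative K)
    (x := .ofAdd x) hx
  let e : UnitAddCircle ≃ₜ Circle := AddCircle.homeomorphCircle one_ne_zero
  have he (a b : Circle) : e.symm (a * b) = e.symm a + e.symm b := by
    apply e.injective
    have hadd (s t : UnitAddCircle) : e (s + t) = e s * e t := by
      simp only [e, AddCircle.homeomorphCircle_apply, AddCircle.toCircle_add]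
    simp only [hadd, Homeomorph.apply_symm_apply]
  let ψ : K →+ UnitAddCircle :=
    AddMonoidHom.mk' (fun y ↦ e.symm (χ (.ofAdd y))) fun y z ↦ by
      rw [ofAdd_add, map_mul, he]
  refine ⟨ψ, e.symm.continuous.comp ((map_continuous χ).comp continuous_ofAdd), fun h ↦ hχ ?_⟩
  have : e.symm (χ (.ofAdd x)) = e.symm (χ (.ofAdd 0)) := h.trans (map_zero ψ).symm
  rw [e.symm.injective this, ofAdd_zero, map_one]

theorem exists_continuous_torus_ker_subset_of_compactSpace {K : Type*} [AddCommGroup K]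
    [TopologicalSpace K] [IsTopologicalAddGroup K] [CompactSpace K] [T2Space K] {U : Set K}
    (hU : U ∈ 𝓝 0) :
    ∃ (n : ℕ) (f : K →+ (Fin n → UnitAddCircle)), Continuous f ∧ (f.ker : Set K) ⊆ U := by
  obtain ⟨W, hWU, hW, h0W⟩ := mem_nhds_iff.1 hU
  have hchar (x : K) (hx : x ∈ Wᶜ) : ∃ χ : K →+ UnitAddCircle, Continuous χ ∧ χ x ≠ 0 :=
    exists_continuous_addMonoidHom_unitAddCircle_apply_ne_zero fun h ↦ hx (h ▸ h0W)
  choose! χ hχ hχx using hchar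
  obtain ⟨t, htW, ht⟩ := hW.isClosed_compl.isCompact.elim_nhds_subcover
    (fun x ↦ {z | χ x z ≠ 0}) fun x hx ↦ (isOpen_ne.preimage (hχ x hx)).mem_nhds (hχx x hx)
  refine ⟨t.card, AddMonoidHom.pi fun j ↦ χ (t.equivFin.symm j),
    continuous_pi fun j ↦ hχ _ (htW _ (t.equivFin.symm j).2), fun z hz ↦ hWU ?_⟩
  by_contra hzW
  obtain ⟨x, hxt, hzx⟩ := mem_iUnion₂.1 (ht hzW)
  refine hzx ?_
  simpa using congrFun hz (t.equivFin ⟨x, hxt⟩)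

theorem IsPrecompact.totallyBounded_univ {G : Type*} [AddCommGroup G] [UniformSpace G]
    [IsUniformAddGroup G] (hG : IsPrecompact G) : TotallyBounded (univ : Set G) := by
  rw [totallyBounded_iff_subset_finite_iUnion_nhds_zero]
  intro V hV
  obtain ⟨F, hF⟩ := hG V hV
  refine ⟨F, F.finite_toSet, fun x _ ↦ ?_⟩
  obtain ⟨y, hy, hxy⟩ := hF x
  exact mem_iUnion₂.2 ⟨y, hy, mem_vadd_set.2 ⟨x - y, hxy, add_sub_cancel y x⟩⟩

theorem compactSpace_completion_of_totallyBounded_univ {X : Type*} [UniformSpace X]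
    (hX : TotallyBounded (univ : Set X)) : CompactSpace (UniformSpace.Completion X) := by
  have hrange := (hX.image (UniformSpace.Completion.uniformContinuous_coe X)).closure
  rw [image_univ, UniformSpace.Completion.denseRange_coe.closure_range] at hrange
  exact ⟨hrange.isCompact_of_isClosed isClosed_univ⟩

theorem IsPrecompact.exists_continuous_torus_ker_subset {G : Type*} [AddCommGroup G]
    [TopologicalSpace G] [IsTopologicalAddGroup G] (hG : IsPrecompact G) {V : Set G}
    (hV : V ∈ 𝓝 0) :
    ∃ (n : ℕ) (f : G →+ (Fin n → UnitAddCircle)), Continuous f ∧ (f.ker : Set G) ⊆ V := by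
  let _ : UniformSpace G := IsTopologicalAddGroup.rightUniformSpace G
  have _ : IsUniformAddGroup G := isUniformAddGroup_of_addCommGroup
  have _ := compactSpace_completion_of_totallyBounded_univ hG.totallyBounded_univ
  have hi := UniformSpace.Completion.isDenseInducing_toCompl G
  rw [hi.nhds_eq_comap, map_zero] at hV
  obtain ⟨U, hU, hUV⟩ := hV
  obtain ⟨n, f, hf, hfU⟩ := exists_continuous_torus_ker_subset_of_compactSpace hU
  exact ⟨n, f.comp UniformSpace.Completion.toCompl, hf.comp hi.continuous,
    fun z hz ↦ hUV (hfU hz)⟩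

end Torus

section Minimality

section QuotientMap

variable {H G : Type*} [AddGroup H] [TopologicalSpace H] [IsTopologicalAddGroup H] [AddGroup G]
  [TopologicalSpace G] {f : H →+ G}

theorem isTopologicalAddGroup_of_isQuotientMap (hf : IsQuotientMap f) :
    IsTopologicalAddGroup G where
  continuous_add := by
    have hopen := AddMonoidHom.isOpenQuotientMap_of_isQuotientMap hf
    rw [(hopen.prodMap hopen).isQuotientMap.continuous_iff]
    simpa [Function.comp_def] using hf.continuous.comp continuous_add
  continuous_neg := by
    rw [hf.continuous_iff]
    simpa [Function.comp_def] using hf.continuous.comp continuous_neg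

theorem t2Space_of_isQuotientMap_of_isClosed_ker (hf : IsQuotientMap f)
    (hker : IsClosed (f.ker : Set H)) : T2Space G := by
  have := isTopologicalAddGroup_of_isQuotientMap hf
  have : T1Space G := IsTopologicalAddGroup.t1Space G (hf.isClosed_preimage.1 hker)
  infer_instance

end QuotientMap

theorem isClosed_graph_comp_symm_of_isClosedEmbedding {X Y Z : Type*} [TopologicalSpace X]
    [TopologicalSpace Y] [T2Space Y] [TopologicalSpace Z] (e : X ≃ Y) (he : Continuous e)
    {ι : X → Z} (hι : IsClosedEmbedding ι) : IsClosed {p : Y × Z | ι (e.symm p.1) = p.2} := by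
  have himage : {p : Y × Z | ι (e.symm p.1) = p.2} =
      Prod.map id ι '' {q : Y × X | q.1 = e q.2} := by
    ext ⟨y, z⟩
    constructor
    · exact fun h ↦ ⟨(y, e.symm y), (e.apply_symm_apply y).symm, Prod.ext rfl h⟩
    · rintro ⟨⟨y', x⟩, hyx : y' = e x, h⟩
      obtain ⟨rfl, rfl⟩ := Prod.mk.inj h
      simp [hyx]
  rw [himage]
  exact (IsClosedEmbedding.id.prodMap hι).isClosedMap _
    (isClosed_eq continuous_fst (he.comp continuous_snd))

variable {G : Type*} [AddCommGroup G] [τ : TopologicalSpace G]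

/-- `V` determines the topology of `G` among the coarser Hausdorff group topologies in which it is
a neighbourhood of `0`; thus `G` is locally minimal iff some neighbourhood of `0` has this
property. -/
def WitnessesLocalMinimality (V : Set G) : Prop :=
  ∀ σ : TopologicalSpace G, τ ≤ σ → @IsTopologicalAddGroup G σ _ → @T2Space G σ →
    V ∈ @nhds G σ 0 → σ = τ

variable {V U : Set G}

theorem WitnessesLocalMinimality.isQuotientMap_of_isClosed_ker
    (hV : WitnessesLocalMinimality V) {H : Type*} [AddGroup H] [TopologicalSpace H]
    [IsTopologicalAddGroup H] {f : H →+ G} (hker : IsClosed (f.ker : Set H)) {s : G → H}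
    (hs : Continuous s) (hfs : Function.LeftInverse f s) (hfV : V ∈ map f (𝓝 0)) :
    IsQuotientMap f := by
  let σ : TopologicalSpace G := .coinduced f inferInstance
  have hf : @IsQuotientMap H G _ σ f :=
    @IsQuotientMap.mk H G _ σ f (@IsCoinducing.mk H G _ σ f rfl) hfs.surjective
  suffices hσ : σ = τ by rwa [hσ] at hf
  have hτσ : τ ≤ σ := by
    have hid := @Continuous.comp G H G τ _ σ s f continuous_coinduced_rng hs
    rwa [hfs.id, continuous_id_iff_le] at hid
  have hVσ : V ∈ @nhds G σ 0 := by
    have hopen := @AddMonoidHom.isOpenQuotientMap_of_isQuotientMap H _ _ _ G _ σ _ _ _ f hf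
    rwa [← map_zero f, ← @IsOpenQuotientMap.map_nhds_eq H G _ σ f hopen]
  exact hV σ hτσ (@isTopologicalAddGroup_of_isQuotientMap H G _ _ _ _ σ f hf)
    (@t2Space_of_isQuotientMap_of_isClosed_ker H G _ _ _ _ σ f hf hker) hVσ

theorem WitnessesLocalMinimality.continuous_of_isClosed_graph [IsTopologicalAddGroup G]
    (hV : WitnessesLocalMinimality V) (hU : U ∈ 𝓝 0) {M : Type*} [AddCommGroup M]
    [TopologicalSpace M] [IsTopologicalAddGroup M] {i : M →+ G}
    (hUV : ∀ u ∈ U, ∀ m, u - i m ∈ V) (hgraph : IsClosed {p : M × G | i p.1 = p.2}) :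
    Continuous i := by
  let f : M × G →+ G := AddMonoidHom.snd M G - i.comp (AddMonoidHom.fst M G)
  have hker : (f.ker : Set (M × G)) = {p | i p.1 = p.2} := by
    ext p
    exact sub_eq_zero.trans eq_comm
  have hfV : V ∈ map f (𝓝 0) :=
    mem_map.2 <| mem_of_superset (continuous_snd.tendsto (0 : M × G) hU) fun p hp ↦
      hUV p.2 hp p.1
  have hf : IsQuotientMap f := hV.isQuotientMap_of_isClosed_ker (hker ▸ hgraph)
    (Continuous.prodMk_right (0 : M)) (fun g ↦ by simp [f]) hfV
  have hi (m : M) : i m = -f (m, 0) := by simp [f]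
  simp only [funext hi]
  fun_prop

theorem WitnessesLocalMinimality.isMinimal_of_isClosed [IsTopologicalAddGroup G]
    (hV : WitnessesLocalMinimality V) {N : AddSubgroup G} (hN : IsClosed (N : Set G)) (hU : U ∈ 𝓝 0)
    (hUV : ∀ u ∈ U, ∀ a ∈ N, u + a ∈ V) : IsMinimal N := by
  intro σ hσ hσgroup hσT2
  have hgraph := @isClosed_graph_comp_symm_of_isClosedEmbedding N N G
    instTopologicalSpaceSubtype σ hσT2 _ (.refl N)
    (continuous_id_iff_le.2 hσ) _ hN.isClosedEmbedding_subtypeVal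
  have hcont := @WitnessesLocalMinimality.continuous_of_isClosed_graph G _ _ V U _ hV hU N _ σ
    hσgroup N.subtype (fun u hu a ↦ sub_eq_add_neg u (a : G) ▸ hUV u hu _ (N.neg_mem a.2)) hgraph
  exact le_antisymm (continuous_iff_le_induced.1 hcont) hσ

end Minimality

/-- A precompact Hausdorff locally minimal abelian topological group `G` has a closed
minimal subgroup `N` such that `G/N` admits a continuous injective homomorphism into a
finite-dimensional torus `𝕋^n`. -/
theorem precompact_locallyMinimal_quotient_into_torus {G : Type*} [AddCommGroup G]
    [TopologicalSpace G] [IsTopologicalAddGroup G] [T2Space G]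
    (hpre : IsPrecompact G) (hlm : LocallyMinimal G) :
    ∃ N : AddSubgroup G, IsClosed (N : Set G) ∧ IsMinimal ↥N ∧
      ∃ (n : ℕ) (f : G ⧸ N →+ (Fin n → UnitAddCircle)),
        Continuous f ∧ Function.Injective f := by
  obtain ⟨V, hV, hVmin⟩ : ∃ V ∈ 𝓝 (0 : G), WitnessesLocalMinimality V := hlm
  obtain ⟨U, hU, hUV⟩ := exists_nhds_zero_half hV
  obtain ⟨n, f, hf, hfU⟩ := hpre.exists_continuous_torus_ker_subset hU
  have hker : IsClosed (f.ker : Set G) := isClosed_singleton.preimage hf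
  refine ⟨f.ker, hker, ?_, n, QuotientAddGroup.kerLift f, hf.quotient_lift _,
    QuotientAddGroup.kerLift_injective f⟩
  exact hVmin.isMinimal_of_isClosed hker hU fun u hu a ha ↦ hUV u hu a (hfU ha)
end
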